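/- Let G be any st-graph that is not an st-path and has at least three vertices. Then there exists a constant C < ∞ (depending on G but not on n) such that c₁(TC(G^{⊘n})) ≥ C⁻¹·log|V(G^{⊘n})| for every n ≥ 0. -/

import Mathlib

open Finset MeasureTheory

open Finset MeasureTheory

/-- The transportation cost norm of a zero-total-mass signed measure `μ` (represented as a
function `V → ℝ`) on a finite metric space with distance `d`: the infimum of costs of
transportation plans representing `μ`. -/
noncomputable def TCnorm {V : Type*} [Fintype V] [DecidableEq V]
    (d : V → V → ℝ) (μ : V → ℝ) : ℝ :=
  sInf { c : ℝ | ∃ (n : ℕ) (a : Fin n → ℝ) (x y : Fin n → V),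
    (∀ i, 0 ≤ a i) ∧
    (∀ z : V, μ z = ∑ i, a i * ((if x i = z then (1 : ℝ) else 0) -
      (if y i = z then (1 : ℝ) else 0))) ∧
    c = ∑ i, a i * d (x i) (y i) }

/-- The `L₁`-distortion of a space `M` equipped with a distance function `ρ`:
the infimum of `D ≥ 1` such that there is a measure space `(Ω, ν)` and a map
`f : M → L₁(ν)` with `ρ x y ≤ ‖f x - f y‖₁ ≤ D * ρ x y` for all `x, y`. -/
noncomputable def c1OfDist {M : Type*} (ρ : M → M → ℝ) : ℝ :=
  sInf { D : ℝ | 1 ≤ D ∧ ∃ (Ω : Type) (_ : MeasurableSpace Ω) (ν : Measure Ω)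
    (f : M → Lp ℝ 1 ν), ∀ x y : M,
      ρ x y ≤ dist (f x) (f y) ∧ dist (f x) (f y) ≤ D * ρ x y }

/-- The `L₁`-distortion of the transportation cost space `TC(V, d)`, i.e. of the space of
zero-total-mass signed measures on `V` with the metric induced by the transportation cost
norm. -/
noncomputable def c1TC {V : Type*} [Fintype V] [DecidableEq V] (d : V → V → ℝ) : ℝ :=
  c1OfDist (fun μ ν : {μ : V → ℝ // ∑ x, μ x = 0} => TCnorm d (fun x => μ.1 x - ν.1 x))

/-- The support of a signed measure given as a function. -/
def msupp {V : Type*} (μ : V → ℝ) : Set V := {x | μ x ≠ 0}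

/-- Diameter of a set with respect to a distance function. -/
noncomputable def sDiam {V : Type*} (d : V → V → ℝ) (S : Set V) : ℝ :=
  sSup { c : ℝ | ∃ x ∈ S, ∃ y ∈ S, c = d x y }

/-- Distance between two sets with respect to a distance function. -/
noncomputable def sDist {V : Type*} (d : V → V → ℝ) (S T : Set V) : ℝ :=
  sInf { c : ℝ | ∃ x ∈ S, ∃ y ∈ T, c = d x y }
/-- A finite weighted directed graph with distinguished source and sink vertices, edge
lengths, and an edge thickness function. This is the underlying data of an `st`-graph. -/
structure WGraph : Type 1 where
  /-- vertex set -/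
  V : Type
  /-- edge index set -/
  ι : Type
  finV : Fintype V
  decV : DecidableEq V
  finι : Fintype ι
  decι : DecidableEq ι
  /-- initial vertex of an edge -/
  src : ι → V
  /-- terminal vertex of an edge -/
  dst : ι → V
  /-- length of an edge -/
  len : ι → ℝ
  /-- thickness of an edge -/
  th : ι → ℝ
  /-- source vertex -/
  s : V
  /-- sink vertex -/
  t : V

attribute [instance] WGraph.finV WGraph.decV WGraph.finι WGraph.decι

namespace WGraph

/-- Initial vertex of a step (an edge traversed forwards or backwards). -/
def stepSrc (G : WGraph) (p : G.ι × Bool) : G.V := if p.2 then G.src p.1 else G.dst p.1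

/-- Terminal vertex of a step. -/
def stepDst (G : WGraph) (p : G.ι × Bool) : G.V := if p.2 then G.dst p.1 else G.src p.1

/-- `G.IsWalk x y l` : the list of steps `l` forms a walk from `x` to `y` in the underlying
undirected graph of `G`. -/
def IsWalk (G : WGraph) : G.V → G.V → List (G.ι × Bool) → Prop
  | x, y, [] => x = y
  | x, y, p :: l => G.stepSrc p = x ∧ G.IsWalk (G.stepDst p) y l

/-- `G.IsDiWalk x y l` : the list of edges `l` forms a directed walk from `x` to `y`. -/
def IsDiWalk (G : WGraph) : G.V → G.V → List G.ι → Prop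
  | x, y, [] => x = y
  | x, y, e :: l => G.src e = x ∧ G.IsDiWalk (G.dst e) y l

/-- The length of a directed walk. -/
def diLen (G : WGraph) (l : List G.ι) : ℝ := (l.map G.len).sum

/-- The weighted shortest-path metric of `G`. -/
noncomputable def gdist (G : WGraph) (x y : G.V) : ℝ :=
  sInf { c : ℝ | ∃ l : List (G.ι × Bool), G.IsWalk x y l ∧
    c = (l.map fun p => G.len p.1).sum }

end WGraph

/-- `G` is an `st`-graph: it has positive edge lengths and thicknesses, it is connected,
its weighted shortest-path metric satisfies `d(s,t) = 1`, every directed path is a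
geodesic, and the thickness function is witnessed by a finite nonempty family of directed
edge paths from `s` to `t` via `th(e) = |{i : e ∈ γ_i}| / |I|`. -/
structure IsSTGraph (G : WGraph) : Prop where
  s_ne_t : G.s ≠ G.t
  len_pos : ∀ e, 0 < G.len e
  th_pos : ∀ e, 0 < G.th e
  conn : ∀ x y : G.V, ∃ l, G.IsWalk x y l
  dist_st : G.gdist G.s G.t = 1
  dir_geodesic : ∀ (x y : G.V) (l : List G.ι), G.IsDiWalk x y l → G.gdist x y = G.diLen l
  th_witness : ∃ (m : ℕ) (γ : Fin (m + 1) → List G.ι),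
    (∀ i, G.IsDiWalk G.s G.t (γ i)) ∧
    ∀ e : G.ι, G.th e = ((Finset.univ.filter fun i => e ∈ γ i).card : ℝ) / (m + 1)

/-- `G` is an `st`-path: it consists of a single directed path from `s` to `t`, and all
edges have thickness `1`. -/
def IsSTPath (G : WGraph) : Prop :=
  ∃ (k : ℕ) (E : Fin k ≃ G.ι) (v : Fin (k + 1) → G.V),
    Function.Bijective v ∧ v 0 = G.s ∧ v (Fin.last k) = G.t ∧
    (∀ i : Fin k, G.src (E i) = v i.castSucc ∧ G.dst (E i) = v i.succ) ∧
    (∀ e, G.th e = 1)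

namespace WGraph

/-- The map sending a vertex of `H` to the corresponding vertex of `G ⊘ H` obtained by
replacing the edge `e` of `G` with a copy of `H` (where `s_H` is identified with the
initial vertex of `e` and `t_H` with the terminal vertex of `e`). -/
def slashEmbed (G H : WGraph) (e : G.ι) (v : H.V) :
    G.V ⊕ (G.ι × {v : H.V // v ≠ H.s ∧ v ≠ H.t}) :=
  if hs : v = H.s then Sum.inl (G.src e)
  else if ht : v = H.t then Sum.inl (G.dst e)
  else Sum.inr (e, ⟨v, hs, ht⟩)

/-- The slash product `G ⊘ H`: every edge of `G` is replaced by a copy of `H`. New edge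
lengths and thicknesses are the products of the corresponding ones of `G` and `H`. -/
def slash (G H : WGraph) : WGraph where
  V := G.V ⊕ (G.ι × {v : H.V // v ≠ H.s ∧ v ≠ H.t})
  ι := G.ι × H.ι
  finV := inferInstance
  decV := inferInstance
  finι := inferInstance
  decι := inferInstance
  src := fun p => slashEmbed G H p.1 (H.src p.2)
  dst := fun p => slashEmbed G H p.1 (H.dst p.2)
  len := fun p => G.len p.1 * H.len p.2
  th := fun p => G.th p.1 * H.th p.2
  s := Sum.inl G.s
  t := Sum.inl G.t

/-- The trivial `st`-path: a single directed edge from `s` to `t` of length 1 and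
thickness 1. -/
def edgeGraph : WGraph where
  V := Bool
  ι := Unit
  finV := inferInstance
  decV := inferInstance
  finι := inferInstance
  decι := inferInstance
  src := fun _ => false
  dst := fun _ => true
  len := fun _ => 1
  th := fun _ => 1
  s := false
  t := true

/-- Slash powers: `G^{⊘0}` is a single directed edge from `s` to `t` of length 1 and
thickness 1, and `G^{⊘(n+1)} = G^{⊘n} ⊘ G`. -/
def slashPow (G : WGraph) : ℕ → WGraph
  | 0 => edgeGraph
  | n + 1 => (G.slashPow n).slash G

end WGraph

/-!
A map of `TC(G^{⊘n})` into `L₁` with distortion `D`, averaged over long translations of the lattice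
of integral measures, becomes almost affine. Its slopes are functions `g` on the vertices with
values in `L₁`, so a scalar inequality `∑ αᵢ |⟨vᵢ, g⟩| ≤ ∑ βₑ |g(e⁺) - g(e⁻)|` yields the inequality
`∑ αᵢ ‖vᵢ‖_TC ≤ D ∑ βₑ len e` for transportation costs.

To choose the measures `vᵢ`, fix an interior vertex `a` of `G` and an edge of thickness `θ < 1`. At
the scale `η = θ ^ j` take the edges of thickness at most `η` that are replaced by `G` at the first
level at which they are so thin, and for each of them the molecule `δ_a - δ_s` of the copy of `G`,
weighted by the thickness of the edge; these weights are all comparable to `η`. A signed sum of the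
molecules has transportation norm at least a constant times the mass of the edges, because disjoint
bumps add up to one `1`-Lipschitz function that attains any prescribed signs. Conversely, let `g` be
the indicator of a set, which suffices by the coarea formula, and let `Q` be the energy of the cut.
Orthogonality of the random signs bounds the expected pairing with `g` by a multiple of `√(η Q)`,
and the pairing vanishes when `η` is large compared to `Q`. The sum over all scales is therefore
dominated by a geometric series and is `O(Q)`, however many scales there are.

An edge of `G^{⊘n}` is a choice of `n` edges of `G`. If `k` of them have thickness at most `θ`, its
own thickness is at most `θ ^ k`, and the mean of `k` is `n p`, where `p > 0` is the mass of the
edges of `G` of thickness at most `θ`. Hence the masses of the scales sum to at least `n p`, so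
`n = O(D)`, whereas `log |V(G^{⊘n})| = O(n)`.
-/

open scoped BigOperators

/-! ### Coarea and random signs -/

section Rademacher

variable {S : Type*} [Fintype S] [DecidableEq S]

lemma expect_sign_mul_sign (w w' : S) :
    𝔼 ε : S → ℤˣ, ((ε w : ℤ) : ℝ) * ((ε w' : ℤ) : ℝ) = if w = w' then 1 else 0 := by
  split_ifs with h
  · subst h
    simp [← Int.cast_mul, Int.units_coe_mul_self]
  · rw [Fintype.expect_eq_sum_div_card, div_eq_zero_iff]
    refine .inl (Finset.sum_involution (fun ε _ ↦ Function.update ε w (-ε w)) ?_ ?_ ?_ ?_)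
    · intro ε _
      simp [Function.update_of_ne (Ne.symm h)]
    · intro ε _ _ hfix
      exact units_ne_neg_self (ε w) (by simpa using (congrFun hfix w).symm)
    · simp
    · simp

lemma expect_sq_sum_sign_mul (c : S → ℝ) :
    𝔼 ε : S → ℤˣ, (∑ w, ((ε w : ℤ) : ℝ) * c w) ^ 2 = ∑ w, c w ^ 2 := by
  calc 𝔼 ε : S → ℤˣ, (∑ w, ((ε w : ℤ) : ℝ) * c w) ^ 2
      = 𝔼 ε : S → ℤˣ, ∑ w, ∑ w', (c w * c w') * (((ε w : ℤ) : ℝ) * ((ε w' : ℤ) : ℝ)) := by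
        refine expect_congr rfl fun ε _ ↦ ?_
        rw [sq, sum_mul_sum]
        exact sum_congr rfl fun w _ ↦ sum_congr rfl fun w' _ ↦ by ring
    _ = ∑ w, ∑ w', (c w * c w') * (if w = w' then 1 else 0) := by
        simp only [expect_sum_comm, ← mul_expect, expect_sign_mul_sign]
    _ = ∑ w, c w ^ 2 := by simp [sq]

lemma expect_abs_sum_sign_mul_le (c : S → ℝ) :
    𝔼 ε : S → ℤˣ, |∑ w, ((ε w : ℤ) : ℝ) * c w| ≤ √(∑ w, c w ^ 2) := by
  have h := expect_mul_sq_le_sq_mul_sq univ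
    (fun ε : S → ℤˣ ↦ |∑ w, ((ε w : ℤ) : ℝ) * c w|) 1
  simp only [Pi.one_apply, mul_one, sq_abs, expect_sq_sum_sign_mul, one_pow] at h
  exact Real.le_sqrt_of_sq_le (by simpa using h)

end Rademacher

section Coarea

variable {V : Type*}

lemma nonneg_induction_indicator [Finite V] {P : (V → ℝ) → Prop} (zero : P 0)
    (add : ∀ (A : Set V) (m : ℝ) (g : V → ℝ), 0 < m → 0 ≤ g → Function.support g ⊆ A → P g →
      P (g + m • A.indicator 1)) (g : V → ℝ) (hg : 0 ≤ g) : P g := by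
  induction hk : (Function.support g).ncard using Nat.strong_induction_on generalizing g with
  | _ k ih =>
    rcases (Function.support g).eq_empty_or_nonempty with hA | hA
    · rwa [Function.support_eq_empty_iff.mp hA]
    obtain ⟨a, ha, hmin⟩ := (Function.support g).exists_min_image g (Set.toFinite _) hA
    set A := Function.support g
    set g' := g - g a • A.indicator 1 with hg'
    have g'_of_mem {x} (hx : x ∈ A) : g' x = g x - g a := by simp [g', hx]
    have g'_of_notMem {x} (hx : x ∉ A) : g' x = 0 := by
      simp [g', hx, Function.notMem_support.mp hx]
    have hsub : Function.support g' ⊂ A := by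
      refine (Set.ssubset_iff_of_subset fun x hx ↦ ?_).mpr ⟨a, ha, by simp [g'_of_mem ha]⟩
      by_contra hxA
      exact hx (g'_of_notMem hxA)
    have hg'_nonneg : 0 ≤ g' := fun x ↦ by
      by_cases hx : x ∈ A
      · simpa [g'_of_mem hx] using hmin x hx
      · simp [g'_of_notMem hx]
    have hP := ih _ (hk ▸ Set.ncard_lt_ncard hsub) g' hg'_nonneg rfl
    simpa [hg'] using add A (g a) g' ((hg a).lt_of_ne (Ne.symm ha)) hg'_nonneg hsub.subset hP

lemma abs_sub_add_smul_indicator {A : Set V} {m : ℝ} {g : V → ℝ} (hm : 0 ≤ m) (hg : 0 ≤ g)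
    (hA : Function.support g ⊆ A) (x y : V) :
    |(g + m • A.indicator (1 : V → ℝ)) x - (g + m • A.indicator (1 : V → ℝ)) y| =
      |g x - g y| + m * |A.indicator (1 : V → ℝ) x - A.indicator 1 y| := by
  have hout {x} (hx : x ∉ A) : g x = 0 := Function.notMem_support.mp fun h ↦ hx (hA h)
  by_cases hx : x ∈ A <;> by_cases hy : y ∈ A
  · simp [hx, hy]
  · simp [hx, hy, hout hy, abs_of_nonneg (hg x), abs_of_nonneg (add_nonneg (hg x) hm)]
  · have hneg : -m + -g y ≤ 0 := by linarith [show 0 ≤ g y from hg y]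
    simp [hx, hy, hout hx, abs_of_nonneg (hg y), abs_of_nonpos hneg]
  · simp [hx, hy, hout hx, hout hy]

/-- Coarea principle: both sides are additive along the layer-cake decomposition of `g`. -/
lemma seminorm_le_sum_abs_sub [Finite V] {ι : Type*} [Fintype ι] {src dst : ι → V} {β : ι → ℝ}
    {N : Seminorm ℝ (V → ℝ)} (hN : N 1 = 0)
    (hcut : ∀ A : Set V, N (A.indicator 1) ≤
      ∑ e, β e * |A.indicator (1 : V → ℝ) (dst e) - A.indicator 1 (src e)|) (g : V → ℝ) :
    N g ≤ ∑ e, β e * |g (dst e) - g (src e)| := by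
  have of_nonneg : ∀ g : V → ℝ, 0 ≤ g → N g ≤ ∑ e, β e * |g (dst e) - g (src e)| := by
    refine nonneg_induction_indicator (by simp) fun A m g hm hg hA ih ↦ ?_
    calc N (g + m • A.indicator 1) ≤ N g + m * N (A.indicator 1) := by
          refine (map_add_le_add N g (m • A.indicator 1)).trans_eq ?_
          rw [map_smul_eq_mul, Real.norm_of_nonneg hm.le]
      _ ≤ ∑ e, β e * |g (dst e) - g (src e)| +
          m * ∑ e, β e * |A.indicator (1 : V → ℝ) (dst e) - A.indicator 1 (src e)| := by
          gcongr
          exact hcut A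
      _ = _ := by
          simp only [abs_sub_add_smul_indicator hm.le hg hA, mul_sum, ← sum_add_distrib]
          exact sum_congr rfl fun e _ ↦ by ring
  obtain ⟨c, hc⟩ := (Set.finite_range g).bddBelow
  calc N g ≤ N (g - c • 1) + N (c • (1 : V → ℝ)) := by
        simpa using map_add_le_add N (g - c • 1) (c • 1)
    _ = N (g - c • 1) := by simp [map_smul_eq_mul, hN]
    _ ≤ _ := by
        simpa using of_nonneg (g - c • 1) fun x ↦ by simpa using hc (Set.mem_range_self x)

end Coarea

section ScalarInequality

lemma sum_range_ite_pow_le_div_one_sub {q : ℝ} (hq0 : 0 ≤ q) (hq1 : q < 1) (J : ℕ) {Y : ℝ}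
    (hY : 0 ≤ Y) : ∑ j ∈ range J, (if q ^ j ≤ Y then q ^ j else 0) ≤ Y / (1 - q) := by
  rw [← sum_filter]
  rcases {j ∈ range J | q ^ j ≤ Y}.eq_empty_or_nonempty with h | h
  · simpa [h] using div_nonneg hY (sub_nonneg.mpr hq1.le)
  · obtain ⟨k, hk, hmin⟩ := exists_min_image _ id h
    calc ∑ j ∈ range J with q ^ j ≤ Y, q ^ j ≤ ∑ j ∈ Ico k J, q ^ j := by
          refine sum_le_sum_of_subset_of_nonneg (fun j hj ↦ ?_) fun j _ _ ↦ by positivity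
          exact mem_Ico.mpr ⟨hmin j hj, mem_range.mp (mem_filter.mp hj).1⟩
      _ ≤ q ^ k / (1 - q) := geom_sum_Ico_le_of_lt_one hq0 hq1
      _ ≤ Y / (1 - q) := by
          have := sub_pos.mpr hq1
          gcongr
          exact (mem_filter.mp hk).2

lemma sqrt_sum_sq_mul_le {S : Type*} [Fintype S] {t δ : S → ℝ} {τ η Q : ℝ} (hτ : 0 < τ)
    (hη : 0 ≤ η) (htτ : ∀ w, τ * η ≤ t w) (htη : ∀ w, t w ≤ η)
    (hδ : ∀ w, |δ w| = 0 ∨ |δ w| = 1) (hQ : ∑ w, t w * |δ w| ≤ Q) :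
    √(∑ w, (t w * δ w) ^ 2) ≤ √Q * (if √η ≤ √(Q / τ) then √η else 0) := by
  have ht0 w : 0 ≤ t w := (mul_nonneg hτ.le hη).trans (htτ w)
  have hle_Q w : t w * |δ w| ≤ Q :=
    (single_le_sum (fun w _ ↦ mul_nonneg (ht0 w) (abs_nonneg (δ w))) (mem_univ w)).trans hQ
  by_cases hδ0 : ∀ w, |δ w| = 0
  · have hδ0' w : δ w = 0 := abs_eq_zero.mp (hδ0 w)
    simp only [hδ0', mul_zero, ne_eq, OfNat.ofNat_ne_zero, not_false_eq_true, zero_pow,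
      sum_const_zero, Real.sqrt_zero]
    positivity
  · push Not at hδ0
    obtain ⟨w, hw⟩ := hδ0
    have hηQ : √η ≤ √(Q / τ) := by
      refine Real.sqrt_le_sqrt ((le_div_iff₀' hτ).mpr ((htτ w).trans ?_))
      simpa [(hδ w).resolve_left hw] using hle_Q w
    have hQ0 : 0 ≤ Q := (mul_nonneg (ht0 w) (abs_nonneg _)).trans (hle_Q w)
    rw [if_pos hηQ, ← Real.sqrt_mul hQ0]
    refine Real.sqrt_le_sqrt ?_
    calc ∑ w, (t w * δ w) ^ 2 ≤ ∑ w, t w * |δ w| * η := by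
          refine sum_le_sum fun w _ ↦ ?_
          rw [mul_pow, ← sq_abs (δ w)]
          rcases hδ w with h | h
          · simp [h]
          · simpa [h, sq] using mul_le_mul_of_nonneg_left (htη w) (ht0 w)
      _ ≤ Q * η := by
          rw [← sum_mul]
          gcongr

variable {V ι : Type*} [Fintype ι] {J : ℕ} {S : Fin J → Type*} [∀ j, Fintype (S j)]
  [∀ j, DecidableEq (S j)]

/-- The seminorm `g ↦ ∑ j, 𝔼 ε, |∑ w, ε w * t j w * (g (a j w) - g (b j w))|` on functions, for
independent random signs `ε`. -/
noncomputable def signedDifferenceSeminorm (t : ∀ j, S j → ℝ) (a b : ∀ j, S j → V) :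
    Seminorm ℝ (V → ℝ) :=
  .of (fun g ↦ ∑ j, 𝔼 ε : S j → ℤˣ, |∑ w, ((ε w : ℤ) : ℝ) * (t j w * (g (a j w) - g (b j w)))|)
    (fun g h ↦ by
      simp only [← sum_add_distrib, ← expect_add_distrib]
      gcongr with j _ ε _
      refine (abs_add_le _ _).trans_eq' ?_
      rw [← sum_add_distrib]
      exact congrArg _ (sum_congr rfl fun w _ ↦ by simp only [Pi.add_apply]; ring))
    (fun c g ↦ by
      simp only [Real.norm_eq_abs, mul_sum, mul_expect, ← abs_mul, Pi.smul_apply, smul_eq_mul]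
      refine sum_congr rfl fun j _ ↦ expect_congr rfl fun ε _ ↦ congrArg _ ?_
      exact sum_congr rfl fun w _ ↦ by ring)

lemma signedDifferenceSeminorm_apply (t : ∀ j, S j → ℝ) (a b : ∀ j, S j → V) (g : V → ℝ) :
    signedDifferenceSeminorm t a b g =
      ∑ j, 𝔼 ε : S j → ℤˣ, |∑ w, ((ε w : ℤ) : ℝ) * (t j w * (g (a j w) - g (b j w)))| := rfl

/-- For the indicator of a set, the families whose scale exceeds the energy contribute nothing and
the others contribute, by orthogonality of the signs, a geometric series. -/
lemma signedDifferenceSeminorm_le [Finite V] {src dst : ι → V} {th : ι → ℝ} (hth : ∀ e, 0 ≤ th e)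
    {t : ∀ j, S j → ℝ} {a b : ∀ j, S j → V} {τ θ K : ℝ} (hτ : 0 < τ) (hθ0 : 0 ≤ θ) (hθ1 : θ < 1)
    (hK : 0 ≤ K) (htτ : ∀ (j : Fin J) w, τ * θ ^ (j : ℕ) ≤ t j w)
    (htθ : ∀ (j : Fin J) w, t j w ≤ θ ^ (j : ℕ))
    (henergy : ∀ j (g : V → ℝ), ∑ w, t j w * |g (a j w) - g (b j w)| ≤
      K * ∑ e, th e * |g (dst e) - g (src e)|) (g : V → ℝ) :
    signedDifferenceSeminorm t a b g ≤
      ∑ e, K / (√τ * (1 - √θ)) * th e * |g (dst e) - g (src e)| := by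
  refine seminorm_le_sum_abs_sub (by simp [signedDifferenceSeminorm_apply]) (fun A ↦ ?_) g
  rw [signedDifferenceSeminorm_apply]
  set χ : V → ℝ := A.indicator 1
  set Q := K * ∑ e, th e * |χ (dst e) - χ (src e)|
  have hQ : 0 ≤ Q := mul_nonneg hK (sum_nonneg fun e _ ↦ mul_nonneg (hth e) (abs_nonneg _))
  have hχ x y : |χ x - χ y| = 0 ∨ |χ x - χ y| = 1 := by
    by_cases hx : x ∈ A <;> by_cases hy : y ∈ A <;> simp [χ, hx, hy]
  have hfamily (j : Fin J) :
      𝔼 ε : S j → ℤˣ, |∑ w, ((ε w : ℤ) : ℝ) * (t j w * (χ (a j w) - χ (b j w)))| ≤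
        √Q * (if √θ ^ (j : ℕ) ≤ √(Q / τ) then √θ ^ (j : ℕ) else 0) := by
    refine (expect_abs_sum_sign_mul_le _).trans ?_
    have hsqrt : √(θ ^ (j : ℕ)) = √θ ^ (j : ℕ) := by
      rw [← Real.sqrt_sq (by positivity : 0 ≤ √θ ^ (j : ℕ)), pow_right_comm, Real.sq_sqrt hθ0]
    simpa only [hsqrt] using
      sqrt_sum_sq_mul_le hτ (pow_nonneg hθ0 j) (htτ j) (htθ j) (fun w ↦ hχ _ _) (henergy j χ)
  have hsqrtθ : √θ < 1 := by rwa [Real.sqrt_lt' one_pos, one_pow]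
  calc _ ≤ ∑ j : Fin J, √Q * (if √θ ^ (j : ℕ) ≤ √(Q / τ) then √θ ^ (j : ℕ) else 0) :=
        sum_le_sum fun j _ ↦ hfamily j
    _ = √Q * ∑ j ∈ range J, (if √θ ^ j ≤ √(Q / τ) then √θ ^ j else 0) := by
        rw [← mul_sum,
          Fin.sum_univ_eq_sum_range fun j ↦ if √θ ^ j ≤ √(Q / τ) then √θ ^ j else 0]
    _ ≤ √Q * (√(Q / τ) / (1 - √θ)) := by
        gcongr
        exact sum_range_ite_pow_le_div_one_sub (Real.sqrt_nonneg θ) hsqrtθ J (Real.sqrt_nonneg _)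
    _ = Q / (√τ * (1 - √θ)) := by
        rw [Real.sqrt_div hQ, div_div, mul_div_assoc', Real.mul_self_sqrt hQ]
    _ = _ := by
        rw [mul_div_right_comm, mul_sum]
        simp only [mul_assoc]

end ScalarInequality

/-! ### Almost affine smoothings -/

section Linearization

open scoped fwdDiff

/-- Averaging over translations along each direction in turn produces a common good point. -/
lemma exists_sum_le_of_le_sum_translates {Z I : Type*} [AddCommMonoid Z] {R : ℕ}
    (hR : 0 < R) (v : I → Z) (c : I → ℝ) (s : Finset I) (Ψ : I → Z → ℝ)
    (h : ∀ i ∈ s, ∀ z, R * c i ≤ ∑ k ∈ range R, Ψ i (z + k • v i)) :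
    ∃ z, ∑ i ∈ s, c i ≤ ∑ i ∈ s, Ψ i z := by
  classical
  have hR' : (0 : ℝ) < R := Nat.cast_pos.mpr hR
  induction s using Finset.induction_on generalizing Ψ with
  | empty => exact ⟨0, by simp⟩
  | insert i s hi ih =>
    obtain ⟨z, hz⟩ := ih (fun j z ↦ (R : ℝ)⁻¹ * ∑ k ∈ range R, Ψ j (z + k • v i)) fun j hj z ↦ by
      rw [← mul_sum, sum_comm, le_inv_mul_iff₀ hR', ← nsmul_eq_mul, ← card_range R,
        ← sum_const, card_range]
      refine sum_le_sum fun k _ ↦ ?_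
      simpa only [add_right_comm] using h j (mem_insert_of_mem hj) (z + k • v i)
    have hz' : ∑ j ∈ insert i s, R * c j ≤
        ∑ k ∈ range R, ∑ j ∈ insert i s, Ψ j (z + k • v i) := by
      rw [sum_comm, sum_insert hi, sum_insert hi, ← mul_sum]
      rw [← mul_sum, le_inv_mul_iff₀ hR'] at hz
      exact add_le_add (h i (mem_insert_self i s) z) hz
    obtain ⟨k, -, hk⟩ := exists_le_of_sum_le (f := fun _ ↦ ∑ j ∈ insert i s, c j)
      (nonempty_range_iff.mpr hR.ne') (by simpa [mul_sum] using hz')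
    exact ⟨_, hk⟩

variable {Z E : Type*} [AddCommGroup Z] [NormedAddCommGroup E] [NormedSpace ℝ E]

/-- The average of `φ` over the translates by `0, u, …, (N - 1) • u`. -/
noncomputable def translationAverage (N : ℕ) (u : Z) (φ : Z → E) (z : Z) : E :=
  (N : ℝ)⁻¹ • ∑ k ∈ range N, φ (z + k • u)

lemma fwdDiff_translationAverage (N : ℕ) (u v : Z) (φ : Z → E) :
    Δ_[v] (translationAverage N u φ) = translationAverage N u (Δ_[v] φ) := by
  ext z
  simp only [fwdDiff, translationAverage, ← smul_sub, ← sum_sub_distrib, add_right_comm]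

lemma fwdDiff_translationAverage_self (N : ℕ) (u : Z) (φ : Z → E) :
    Δ_[u] (translationAverage N u φ) = (N : ℝ)⁻¹ • Δ_[N • u] φ := by
  ext z
  have htelescope := sum_range_sub (fun k ↦ φ (z + k • u)) N
  simp only [zero_smul, add_zero, succ_nsmul, ← add_assoc] at htelescope
  simp only [fwdDiff, translationAverage, Pi.smul_apply, ← smul_sub, ← sum_sub_distrib,
    ← htelescope, add_right_comm]

lemma norm_translationAverage_le {N : ℕ} (hN : 0 < N) {u : Z} {φ : Z → E} {C : ℝ}
    (h : ∀ z, ‖φ z‖ ≤ C) (z : Z) : ‖translationAverage N u φ z‖ ≤ C := by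
  rw [translationAverage, norm_smul, norm_inv, Real.norm_natCast,
    inv_mul_le_iff₀ (Nat.cast_pos.mpr hN)]
  simpa using norm_sum_le_of_le (range N) fun k _ ↦ h (z + k • u)

lemma norm_translationAverage_sub_le {N : ℕ} (hN : 0 < N) {u : Z} {φ : Z → E} {L : Z → ℝ}
    (hL : ∀ v z, ‖Δ_[v] φ z‖ ≤ L v) (z : Z) :
    ‖translationAverage N u φ z - φ z‖ ≤ (N : ℝ)⁻¹ * ∑ k ∈ range N, L (k • u) := by
  have hN' : (N : ℝ) ≠ 0 := Nat.cast_ne_zero.mpr hN.ne'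
  have : translationAverage N u φ z - φ z = (N : ℝ)⁻¹ • ∑ k ∈ range N, Δ_[k • u] φ z := by
    simp [translationAverage, fwdDiff, smul_sub, ← Nat.cast_smul_eq_nsmul ℝ, hN']
  rw [this, norm_smul, norm_inv, Real.norm_natCast]
  gcongr
  exact norm_sum_le_of_le _ fun k _ ↦ hL _ z

lemma exists_smoothing {φ : Z → E} {L : Z → ℝ} (hL : ∀ v z, ‖Δ_[v] φ z‖ ≤ L v) {N : ℕ}
    (hN : 0 < N) (s : Finset Z) :
    ∃ (F : Z → E) (B : ℝ), (∀ v z, ‖Δ_[v] F z‖ ≤ L v) ∧ (∀ z, ‖F z - φ z‖ ≤ B) ∧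
      ∀ u ∈ s, ∀ v z, ‖Δ_[v] (Δ_[u] F) z‖ ≤ 2 * (N : ℝ)⁻¹ * L v := by
  classical
  induction s using Finset.induction_on with
  | empty => exact ⟨φ, 0, hL, by simp, by simp⟩
  | insert u s _ ih =>
    obtain ⟨F, B, hF, hB, hs⟩ := ih
    refine ⟨translationAverage N u F, (N : ℝ)⁻¹ * ∑ k ∈ range N, L (k • u) + B,
      fun v z ↦ ?_, fun z ↦ ?_, fun w hw v z ↦ ?_⟩
    · rw [fwdDiff_translationAverage]
      exact norm_translationAverage_le hN (hF v) z
    · exact (norm_sub_le_norm_sub_add_norm_sub _ (F z) _).trans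
        (add_le_add (norm_translationAverage_sub_le hN hF z) (hB z))
    · rcases mem_insert.mp hw with rfl | hw
      · rw [fwdDiff_translationAverage_self, fwdDiff_const_smul, Pi.smul_apply, norm_smul,
          norm_inv, Real.norm_natCast, mul_comm (2 : ℝ), mul_assoc]
        gcongr
        have : Δ_[v] (Δ_[N • w] F) z = Δ_[v] F (z + N • w) - Δ_[v] F z := by
          simp only [fwdDiff, add_right_comm z v]
          abel
        rw [this, two_mul]
        exact norm_sub_le_of_le (hF v _) (hF v z)
      · rw [fwdDiff_translationAverage, fwdDiff_translationAverage]
        exact norm_translationAverage_le hN (hs w hw v) z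

section FirstOrder

variable {ι : Type*} [Fintype ι] [DecidableEq ι]

/-- The error of the first-order approximation of `Δ_[v] F` by the differences of `F` along the
basis vectors. -/
noncomputable def firstOrderError (F : (ι → ℤ) → E) (v z : ι → ℤ) : E :=
  Δ_[v] F z - ∑ y, (v y : ℝ) • Δ_[Pi.single y 1] F z

lemma firstOrderError_add (F : (ι → ℤ) → E) (a b z : ι → ℤ) :
    firstOrderError F (a + b) z = firstOrderError F a z + firstOrderError F b (z + a) +
      ∑ y, (b y : ℝ) • Δ_[a] (Δ_[Pi.single y 1] F) z := by
  have hmixed (y : ι) : Δ_[a] (Δ_[Pi.single y 1] F) z =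
      Δ_[Pi.single y 1] F (z + a) - Δ_[Pi.single y 1] F z := rfl
  have hdiff : Δ_[a + b] F z = Δ_[a] F z + Δ_[b] F (z + a) := by
    simp only [fwdDiff, add_assoc]
    abel
  simp only [firstOrderError, hmixed, hdiff, Pi.add_apply, Int.cast_add, add_smul, smul_sub,
    sum_add_distrib, sum_sub_distrib]
  abel

lemma firstOrderError_zero (F : (ι → ℤ) → E) (z : ι → ℤ) : firstOrderError F 0 z = 0 := by
  simp [firstOrderError, fwdDiff]

lemma firstOrderError_single (F : (ι → ℤ) → E) (y : ι) (z : ι → ℤ) :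
    firstOrderError F (Pi.single y 1) z = 0 := by
  simp [firstOrderError, Pi.single_apply]

lemma norm_sum_smul_mixedDiff_le {F : (ι → ℤ) → E} {L : (ι → ℤ) → ℝ} {η : ℝ}
    (h : ∀ y u z, ‖Δ_[u] (Δ_[Pi.single y 1] F) z‖ ≤ η * L u) (a b z : ι → ℤ) :
    ‖∑ y, (b y : ℝ) • Δ_[a] (Δ_[Pi.single y 1] F) z‖ ≤ (∑ y, |(b y : ℝ)|) * L a * η := by
  rw [mul_assoc, mul_comm (L a), sum_mul]
  refine norm_sum_le_of_le _ fun y _ ↦ ?_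
  rw [norm_smul, Real.norm_eq_abs]
  gcongr
  exact h y a z

variable (E) in
/-- The vectors along which the first-order error is controlled by the mixed differences, uniformly
over all functions into `E`. -/
def firstOrderSubgroup (L : (ι → ℤ) → ℝ) : AddSubgroup (ι → ℤ) where
  carrier := {v | ∃ C : ℝ, ∀ (F : (ι → ℤ) → E) (η : ℝ),
    (∀ y u z, ‖Δ_[u] (Δ_[Pi.single y 1] F) z‖ ≤ η * L u) → ∀ z, ‖firstOrderError F v z‖ ≤ C * η}
  zero_mem' := ⟨0, fun F η _ z ↦ by simp [firstOrderError_zero]⟩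
  add_mem' := by
    rintro a b ⟨Ca, ha⟩ ⟨Cb, hb⟩
    refine ⟨Ca + Cb + (∑ y, |(b y : ℝ)|) * L a, fun F η h z ↦ ?_⟩
    rw [firstOrderError_add, add_mul, add_mul]
    exact norm_add_le_of_le (norm_add_le_of_le (ha F η h z) (hb F η h (z + a)))
      (norm_sum_smul_mixedDiff_le h a b z)
  neg_mem' := by
    rintro a ⟨C, ha⟩
    refine ⟨C + (∑ y, |(a y : ℝ)|) * L (-a), fun F η h z ↦ ?_⟩
    have hcancel := firstOrderError_add F (-a) a z
    rw [neg_add_cancel, firstOrderError_zero, add_assoc, eq_comm, add_eq_zero_iff_eq_neg] at hcancel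
    rw [hcancel, norm_neg, add_mul]
    exact norm_add_le_of_le (ha F η h _) (norm_sum_smul_mixedDiff_le h (-a) a z)

variable (E) in
lemma firstOrderSubgroup_eq_top (L : (ι → ℤ) → ℝ) : firstOrderSubgroup E L = ⊤ := by
  refine (AddSubgroup.eq_top_iff' _).mpr fun v ↦ AddSubgroup.pi_mem_of_single_mem v fun y ↦ ?_
  have hsingle : (Pi.single y 1 : ι → ℤ) ∈ firstOrderSubgroup E L :=
    ⟨0, fun F η _ z ↦ by simp [firstOrderError_single]⟩
  simpa [← Pi.single_smul] using zsmul_mem hsingle (v y)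

lemma exists_norm_firstOrderError_le (L : (ι → ℤ) → ℝ) (v : ι → ℤ) :
    ∃ C : ℝ, ∀ (F : (ι → ℤ) → E) (η : ℝ),
      (∀ y u z, ‖Δ_[u] (Δ_[Pi.single y 1] F) z‖ ≤ η * L u) →
        ∀ z, ‖firstOrderError F v z‖ ≤ C * η :=
  (AddSubgroup.eq_top_iff' _).mp (firstOrderSubgroup_eq_top E L) v

end FirstOrder

omit [NormedSpace ℝ E] in
lemma mul_sub_le_sum_norm_fwdDiff {F φ : Z → E} {B ℓ : ℝ} {v z : Z} {R : ℕ} (hR : 0 < R)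
    (hB : ∀ z, ‖F z - φ z‖ ≤ B) (hlow : R * ℓ ≤ ‖Δ_[R • v] φ z‖) :
    R * (ℓ - 2 * B / R) ≤ ∑ k ∈ range R, ‖Δ_[v] F (z + k • v)‖ := by
  have hR' : (R : ℝ) ≠ 0 := Nat.cast_ne_zero.mpr hR.ne'
  have htelescope : Δ_[R • v] F z = ∑ k ∈ range R, Δ_[v] F (z + k • v) := by
    simpa [fwdDiff, succ_nsmul, ← add_assoc] using
      (sum_range_sub (fun k ↦ F (z + k • v)) R).symm
  have hclose : Δ_[R • v] φ z = Δ_[R • v] F z - (F (z + R • v) - φ (z + R • v)) + (F z - φ z) := by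
    simp only [fwdDiff]
    abel
  have hnorm : ‖Δ_[R • v] φ z‖ ≤ ‖Δ_[R • v] F z‖ + B + B := by
    rw [hclose]
    exact norm_add_le_of_le (norm_sub_le_of_le le_rfl (hB _)) (hB z)
  calc R * (ℓ - 2 * B / R) = R * ℓ - 2 * B := by field_simp
    _ ≤ ‖Δ_[R • v] F z‖ := by linarith
    _ ≤ _ := htelescope ▸ norm_sum_le _ _

variable {I : Type*} [Fintype I] {v : I → Z} {α ℓ : I → ℝ} {ε : ℝ}

omit [NormedSpace ℝ E] in
lemma exists_sum_mul_norm_fwdDiff_ge {F φ : Z → E} {B : ℝ} (hα : ∀ i, 0 ≤ α i)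
    (hB : ∀ z, ‖F z - φ z‖ ≤ B) (hlow : ∀ i (R : ℕ) z, R * ℓ i ≤ ‖Δ_[R • v i] φ z‖)
    (hε : 0 < ε) : ∃ x, ∑ i, α i * ℓ i - ε ≤ ∑ i, α i * ‖Δ_[v i] F x‖ := by
  obtain ⟨R, hR⟩ := exists_nat_gt ((∑ i, α i) * (2 * B) / ε)
  have hB0 : 0 ≤ B := (norm_nonneg _).trans (hB 0)
  have hR' : (0 : ℝ) < R := hR.trans_le' (div_nonneg (mul_nonneg (sum_nonneg fun i _ ↦ hα i)
    (by positivity)) hε.le)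
  have hR0 : 0 < R := Nat.cast_pos.mp hR'
  obtain ⟨x, hx⟩ := exists_sum_le_of_le_sum_translates hR0 v (fun i ↦ α i * (ℓ i - 2 * B / R)) univ
    (fun i z ↦ α i * ‖Δ_[v i] F z‖) fun i _ z ↦ by
      rw [← mul_sum, mul_left_comm]
      exact mul_le_mul_of_nonneg_left (mul_sub_le_sum_norm_fwdDiff hR0 hB (hlow i R z)) (hα i)
  refine ⟨x, hx.trans' ?_⟩
  simp only [mul_sub, sum_sub_distrib, ← sum_mul]
  gcongr
  rw [mul_div_assoc', div_le_comm₀ hR' hε]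
  exact hR.le

/-- Smoothing `φ` makes it nearly affine at unit scale while staying at bounded distance from `φ`,
so that the lower bounds along long multiples of the `v i` survive. -/
lemma exists_sum_mul_norm_sum_smul_ge {ι : Type*} [Fintype ι] [DecidableEq ι] {v : I → ι → ℤ}
    {φ : (ι → ℤ) → E} {L : (ι → ℤ) → ℝ} (hL : ∀ v z, ‖Δ_[v] φ z‖ ≤ L v) (hα : ∀ i, 0 ≤ α i)
    (hlow : ∀ i (R : ℕ) z, R * ℓ i ≤ ‖Δ_[R • v i] φ z‖) (hε : 0 < ε) :
    ∃ g : ι → E, (∀ y y', ‖g y - g y'‖ ≤ L (Pi.single y 1 - Pi.single y' 1)) ∧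
      ∑ i, α i * ℓ i - ε ≤ ∑ i, α i * ‖∑ y, (v i y : ℝ) • g y‖ := by
  choose C hC using fun i ↦ exists_norm_firstOrderError_le (E := E) L (v i)
  obtain ⟨N, hN⟩ := exists_nat_gt (max 0 ((∑ i, α i * C i) * 4 / ε))
  have hN' : (0 : ℝ) < N := hN.trans_le' (le_max_left _ _)
  obtain ⟨F, B, hF, hB, hmixed⟩ := exists_smoothing hL (Nat.cast_pos.mp hN')
    (univ.image fun y ↦ Pi.single y 1)
  obtain ⟨x, hx⟩ := exists_sum_mul_norm_fwdDiff_ge hα hB hlow (half_pos hε)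
  refine ⟨fun y ↦ Δ_[Pi.single y 1] F x, fun y y' ↦ ?_, ?_⟩
  · convert hF (Pi.single y 1 - Pi.single y' 1) (x + Pi.single y' 1) using 2
    simp [fwdDiff]
  have herror (i : I) : ‖Δ_[v i] F x‖ ≤
      ‖∑ y, (v i y : ℝ) • Δ_[Pi.single y 1] F x‖ + C i * (2 * (N : ℝ)⁻¹) :=
    (norm_le_norm_add_norm_sub' _ _).trans
      (add_le_add_right (hC i F _ (fun y ↦ hmixed _ (mem_image_of_mem _ (mem_univ y))) x) _)
  have hsmall : (∑ i, α i * C i) * (2 * (N : ℝ)⁻¹) ≤ ε / 2 := by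
    have := (div_le_iff₀ hε).mp ((le_max_right _ _).trans hN.le)
    rw [← mul_assoc, ← div_eq_mul_inv, div_le_iff₀ hN']
    linarith
  have hsum := hx.trans (sum_le_sum fun i _ ↦ mul_le_mul_of_nonneg_left (herror i) (hα i))
  simp only [mul_add, sum_add_distrib, ← mul_assoc (α _), ← sum_mul] at hsum
  linarith

end Linearization

section L1

variable {Ω V I J : Type*} [MeasurableSpace Ω] {ν : Measure Ω} [Fintype V] [Fintype I] [Fintype J]

lemma L1_norm_sum_smul_eq_integral (c : V → ℝ) (g : V → Lp ℝ 1 ν) :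
    ‖∑ y, c y • g y‖ = ∫ ω, |∑ y, c y * g y ω| ∂ν := by
  rw [L1.norm_eq_integral_norm]
  refine integral_congr_ae ?_
  have hsmul : ∀ᵐ ω ∂ν, ∀ y, (c y • g y) ω = c y * g y ω :=
    ae_all_iff.mpr fun y ↦ Lp.coeFn_smul (c y) (g y)
  filter_upwards [Lp.coeFn_finsetSum univ fun y ↦ c y • g y, hsmul] with ω hsum hsmul
  rw [hsum, Finset.sum_apply, Real.norm_eq_abs]
  simp only [hsmul]

lemma integrable_mul_abs_sum_mul (γ : ℝ) (c : V → ℝ) (g : V → Lp ℝ 1 ν) :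
    Integrable (fun ω ↦ γ * |∑ y, c y * g y ω|) ν :=
  (integrable_finsetSum _ fun y _ ↦ (L1.integrable_coeFn (g y)).const_mul _).abs.const_mul γ

/-- Scalar inequalities pass to `L₁` by integrating them pointwise. -/
lemma sum_mul_norm_sum_smul_le {α : I → ℝ} {a : I → V → ℝ} {β : J → ℝ} {b : J → V → ℝ}
    (h : ∀ g : V → ℝ, ∑ i, α i * |∑ y, a i y * g y| ≤ ∑ j, β j * |∑ y, b j y * g y|)
    (g : V → Lp ℝ 1 ν) :
    ∑ i, α i * ‖∑ y, a i y • g y‖ ≤ ∑ j, β j * ‖∑ y, b j y • g y‖ := by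
  have hint (γ : ℝ) (c : V → ℝ) := integrable_mul_abs_sum_mul γ c g
  simp only [L1_norm_sum_smul_eq_integral, ← integral_const_mul]
  rw [← integral_finsetSum _ fun i _ ↦ hint (α i) (a i),
    ← integral_finsetSum _ fun j _ ↦ hint (β j) (b j)]
  exact integral_mono (integrable_finsetSum _ fun i _ ↦ hint (α i) (a i))
    (integrable_finsetSum _ fun j _ ↦ hint (β j) (b j)) fun ω ↦ h fun y ↦ g y ω

end L1

/-! ### Transportation cost and distortion -/

section TransportationCost

variable {V : Type*} [Fintype V] [DecidableEq V] {d : V → V → ℝ} {μ : V → ℝ}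

/-- The costs of the transportation plans representing `μ`, whose infimum is `TCnorm d μ`. -/
def transportCosts (d : V → V → ℝ) (μ : V → ℝ) : Set ℝ :=
  {c : ℝ | ∃ (n : ℕ) (a : Fin n → ℝ) (x y : Fin n → V), (∀ i, 0 ≤ a i) ∧
    (∀ z, μ z = ∑ i, a i * ((if x i = z then (1 : ℝ) else 0) - (if y i = z then (1 : ℝ) else 0))) ∧
    c = ∑ i, a i * d (x i) (y i)}

omit [Fintype V] in
lemma sum_mul_mem_transportCosts {κ : Type*} [Fintype κ] {a : κ → ℝ} {x y : κ → V}
    (ha : ∀ i, 0 ≤ a i) (hμ : ∀ z, μ z =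
      ∑ i, a i * ((if x i = z then (1 : ℝ) else 0) - (if y i = z then (1 : ℝ) else 0))) :
    ∑ i, a i * d (x i) (y i) ∈ transportCosts d μ := by
  let e := (Fintype.equivFin κ).symm
  refine ⟨Fintype.card κ, a ∘ e, x ∘ e, y ∘ e, fun i ↦ ha _, fun z ↦ ?_, ?_⟩
  · exact (hμ z).trans (Equiv.sum_comp e _).symm
  · exact (Equiv.sum_comp e fun i ↦ a i * d (x i) (y i)).symm

/-- The positive part is transported to the base point `s`, the negative part from it. -/
lemma sum_abs_mul_mem_transportCosts (d : V → V → ℝ) (s : V) (hμ : ∑ x, μ x = 0) :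
    ∑ z, |μ z| * d (if 0 ≤ μ z then z else s) (if 0 ≤ μ z then s else z) ∈
      transportCosts d μ := by
  refine sum_mul_mem_transportCosts (fun z ↦ abs_nonneg _) fun z ↦ ?_
  have hterm (i : V) : |μ i| * ((if (if 0 ≤ μ i then i else s) = z then (1 : ℝ) else 0) -
      (if (if 0 ≤ μ i then s else i) = z then (1 : ℝ) else 0)) =
        (if i = z then μ i else 0) - μ i * (if s = z then 1 else 0) := by
    rcases le_or_gt 0 (μ i) with hi | hi
    · simp [hi, abs_of_nonneg hi, mul_sub]
    · simp only [hi.not_ge, abs_of_neg hi, if_false, mul_ite, mul_one, mul_zero, mul_sub]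
      split_ifs <;> ring
  simp only [hterm, sum_sub_distrib, ← sum_mul, hμ]
  simp

lemma TCnorm_le_of_mem_transportCosts (hd : ∀ x y, 0 ≤ d x y) {c : ℝ}
    (hc : c ∈ transportCosts d μ) : TCnorm d μ ≤ c := by
  refine csInf_le ⟨0, ?_⟩ hc
  rintro c ⟨n, a, x, y, ha, -, rfl⟩
  exact sum_nonneg fun i _ ↦ mul_nonneg (ha i) (hd _ _)

lemma TCnorm_single_sub_single_le (hd : ∀ x y, 0 ≤ d x y) (x y : V) :
    TCnorm d (Pi.single x 1 - Pi.single y 1) ≤ d x y := by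
  refine TCnorm_le_of_mem_transportCosts hd ?_
  simpa using sum_mul_mem_transportCosts (κ := Unit) (d := d)
    (μ := Pi.single x 1 - Pi.single y 1) (a := 1) (x := fun _ ↦ x) (y := fun _ ↦ y) (by simp)
    fun z ↦ by simp [Pi.single_apply, eq_comm (a := z)]

lemma TCnorm_le_mul_sum_abs [Nonempty V] {K : ℝ} (hd : ∀ x y, 0 ≤ d x y) (hK : ∀ x y, d x y ≤ K)
    (hμ : ∑ x, μ x = 0) : TCnorm d μ ≤ K * ∑ z, |μ z| := by
  refine (TCnorm_le_of_mem_transportCosts hd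
    (sum_abs_mul_mem_transportCosts d (Classical.arbitrary V) hμ)).trans ?_
  rw [mul_comm, sum_mul]
  gcongr
  exact hK _ _

lemma le_TCnorm [Nonempty V] (hμ : ∑ x, μ x = 0) {b : ℝ} (hb : ∀ c ∈ transportCosts d μ, b ≤ c) :
    b ≤ TCnorm d μ :=
  le_csInf ⟨_, sum_abs_mul_mem_transportCosts d (Classical.arbitrary V) hμ⟩ hb

lemma TCnorm_nonneg [Nonempty V] (hd : ∀ x y, 0 ≤ d x y) (hμ : ∑ x, μ x = 0) :
    0 ≤ TCnorm d μ := by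
  refine le_TCnorm hμ ?_
  rintro _ ⟨n, a, x, y, ha, -, rfl⟩
  exact sum_nonneg fun i _ ↦ mul_nonneg (ha i) (hd _ _)

lemma mul_TCnorm_le_TCnorm_smul [Nonempty V] (hd : ∀ x y, 0 ≤ d x y) (hμ : ∑ x, μ x = 0) {r : ℝ}
    (hr : 0 ≤ r) : r * TCnorm d μ ≤ TCnorm d (r • μ) := by
  have hrμ : ∑ x, (r • μ) x = 0 := by simp [← mul_sum, hμ]
  rcases hr.eq_or_lt with rfl | hr
  · simpa using TCnorm_nonneg hd hrμ
  refine le_TCnorm hrμ ?_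
  rintro _ ⟨n, a, x, y, ha, hz, rfl⟩
  rw [← le_inv_mul_iff₀ hr]
  refine TCnorm_le_of_mem_transportCosts hd ⟨n, fun i ↦ r⁻¹ * a i, x, y,
    fun i ↦ mul_nonneg (inv_nonneg.mpr hr.le) (ha i), fun z ↦ ?_, ?_⟩
  · simp only [mul_assoc, ← mul_sum, ← hz z, Pi.smul_apply, smul_eq_mul]
    rw [inv_mul_cancel_left₀ hr.ne']
  · simp only [mul_assoc, ← mul_sum]

lemma sum_mul_le_TCnorm [Nonempty V] (hμ : ∑ x, μ x = 0) {h : V → ℝ}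
    (hh : ∀ x y, h x - h y ≤ d x y) : ∑ z, h z * μ z ≤ TCnorm d μ := by
  refine le_TCnorm hμ ?_
  rintro _ ⟨n, a, x, y, ha, hz, rfl⟩
  calc ∑ z, h z * μ z = ∑ i, a i * (h (x i) - h (y i)) := by
        simp only [hz, mul_sum]
        rw [sum_comm]
        refine sum_congr rfl fun i _ ↦ ?_
        simp only [mul_left_comm (h _), ← mul_sum, mul_sub, sum_sub_distrib]
        simp
    _ ≤ ∑ i, a i * d (x i) (y i) := sum_le_sum fun i _ ↦ mul_le_mul_of_nonneg_left (hh _ _) (ha i)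

lemma mul_sum_abs_le_TCnorm [Nonempty V] {c : ℝ} (hc : 0 ≤ c) (hd : ∀ x y, 0 ≤ d x y)
    (hsep : ∀ x y, x ≠ y → c ≤ d x y) (hμ : ∑ x, μ x = 0) :
    c / 2 * ∑ z, |μ z| ≤ TCnorm d μ := by
  have hsign (x : V) : -1 ≤ (SignType.sign (μ x) : ℝ) ∧ (SignType.sign (μ x) : ℝ) ≤ 1 := by
    rcases SignType.sign (μ x) <;> norm_num
  refine (sum_mul_le_TCnorm hμ (h := fun x ↦ c / 2 * SignType.sign (μ x)) fun x y ↦ ?_).trans' ?_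
  · rcases eq_or_ne x y with rfl | hxy
    · simpa using hd x x
    · nlinarith [hsep x y hxy, hsign x, hsign y]
  · simp only [mul_assoc, ← mul_sum, sign_mul_self, le_refl]

end TransportationCost

section Distortion

/-- `D` is the distortion of an embedding into an `L₁` space: the condition of which `c1OfDist` is
the infimum. -/
def IsL1Distortion {M : Type*} (ρ : M → M → ℝ) (D : ℝ) : Prop :=
  1 ≤ D ∧ ∃ (Ω : Type) (_ : MeasurableSpace Ω) (ν : Measure Ω) (f : M → Lp ℝ 1 ν),
    ∀ x y : M, ρ x y ≤ dist (f x) (f y) ∧ dist (f x) (f y) ≤ D * ρ x y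

/-- The underlying vector space of `TC(V)`: signed measures of total mass zero. -/
abbrev ZeroSum (V : Type*) [Fintype V] : Type _ := {μ : V → ℝ // ∑ x, μ x = 0}

/-- The metric of `TC(V, d)`. -/
noncomputable def TCdist {V : Type*} [Fintype V] [DecidableEq V] (d : V → V → ℝ)
    (μ ν : ZeroSum V) : ℝ :=
  TCnorm d (μ.1 - ν.1)

lemma ZeroSum.sum_sub {V : Type*} [Fintype V] (μ ν : ZeroSum V) : ∑ x, (μ.1 - ν.1) x = 0 := by
  simp [μ.2, ν.2]

lemma exists_pos_forall_lt {α : Type*} [Finite α] {f : α → ℝ} (hf : ∀ x, 0 < f x) :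
    ∃ c > 0, ∀ x, c < f x := by
  simpa using Pi.exists_forall_pos_add_lt (x := fun _ ↦ 0) hf

lemma exists_isL1Distortion_TCdist {V : Type} [Fintype V] [DecidableEq V] [Nonempty V]
    {d : V → V → ℝ} (hd : ∀ x y, 0 ≤ d x y) (hpos : ∀ x y, x ≠ y → 0 < d x y) :
    ∃ D, IsL1Distortion (TCdist d) D := by
  let _ : MeasurableSpace V := ⊤
  have : DiscreteMeasurableSpace V := ⟨fun _ ↦ trivial⟩
  obtain ⟨c, hc, hsep⟩ := exists_pos_forall_lt fun p : {p : V × V // p.1 ≠ p.2} ↦ hpos _ _ p.2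
  obtain ⟨K, hK⟩ := (Set.finite_range (Function.uncurry d)).bddAbove
  replace hK x y : d x y ≤ K := hK (Set.mem_range_self (x, y))
  have hK0 : 0 ≤ K := (hd _ _).trans (hK (Classical.arbitrary V) (Classical.arbitrary V))
  have hint (μ : V → ℝ) : Integrable μ .count := .of_finite
  refine ⟨max 1 (K / (c / 2)), le_max_left _ _, V, inferInstance, .count,
    fun μ ↦ K • (hint μ.1).toL1 μ.1, fun μ ν ↦ ?_⟩
  have hdist : dist (K • (hint μ.1).toL1 μ.1) (K • (hint ν.1).toL1 ν.1) =
      K * ∑ z, |(μ.1 - ν.1) z| := by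
    rw [dist_eq_norm, ← smul_sub, ← Integrable.toL1_sub, norm_smul,
      L1.norm_of_fun_eq_integral_norm, integral_count, Real.norm_of_nonneg hK0]
    rfl
  have hlower :=
    mul_sum_abs_le_TCnorm hc.le hd (fun x y hxy ↦ (hsep ⟨(x, y), hxy⟩).le) (μ.sum_sub ν)
  rw [hdist]
  refine ⟨TCnorm_le_mul_sum_abs hd hK (μ.sum_sub ν), ?_⟩
  calc K * ∑ z, |(μ.1 - ν.1) z| = K / (c / 2) * (c / 2 * ∑ z, |(μ.1 - ν.1) z|) := by field_simp
    _ ≤ max 1 (K / (c / 2)) * TCdist d μ ν := by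
        gcongr
        · exact le_max_right _ _
        · exact hlower

/-- The integer vector `z` as a measure of total mass zero, balanced at the base point `s`. This
lattice of `TC(V)` is where an embedding is linearized. -/
noncomputable def balance {V : Type*} [Fintype V] [DecidableEq V] (s : V) :
    (V → ℤ) →+ (V → ℝ) :=
  AddMonoidHom.mk' (fun z x ↦ z x - (Pi.single s (∑ y, (z y : ℝ)) : V → ℝ) x) fun z z' ↦ by
    ext x
    simp only [Pi.add_apply, Int.cast_add, sum_add_distrib, Pi.single_add]
    ring

variable {V : Type*} [Fintype V] [DecidableEq V] {d : V → V → ℝ}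

lemma sum_balance (s : V) (z : V → ℤ) : ∑ x, balance s z x = 0 := by
  simp [balance]

lemma balance_of_sum_eq_zero (s : V) {z : V → ℤ} (hz : ∑ x, z x = 0) :
    balance s z = fun x ↦ (z x : ℝ) := by
  have hz' : ∑ x, (z x : ℝ) = 0 := mod_cast hz
  ext x
  simp [balance, hz']

/-- The embedding is replaced by an almost affine function on the lattice of integral measures; the
inequality `h` applies pointwise to its slopes. -/
theorem sum_mul_TCnorm_le [Nonempty V] {D : ℝ} (hD : IsL1Distortion (TCdist d) D)
    (hd : ∀ x y, 0 ≤ d x y) {I J : Type*} [Fintype I] [Fintype J] {v : I → V → ℤ}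
    (hv : ∀ i, ∑ x, v i x = 0) {α : I → ℝ} (hα : ∀ i, 0 ≤ α i) {β : J → ℝ} (hβ : ∀ j, 0 ≤ β j)
    {src dst : J → V} (h : ∀ g : V → ℝ,
      ∑ i, α i * |∑ x, (v i x : ℝ) * g x| ≤ ∑ j, β j * |g (dst j) - g (src j)|) :
    ∑ i, α i * TCnorm d (fun x ↦ (v i x : ℝ)) ≤ D * ∑ j, β j * d (dst j) (src j) := by
  obtain ⟨hD1, Ω, _, ν, f, hf⟩ := hD
  let s := Classical.arbitrary V
  let φ (z : V → ℤ) : Lp ℝ 1 ν := f ⟨balance s z, sum_balance s z⟩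
  have hφ (z z' : V → ℤ) : TCnorm d (balance s z) ≤ ‖fwdDiff z φ z'‖ ∧
      ‖fwdDiff z φ z'‖ ≤ D * TCnorm d (balance s z) := by
    have h := hf ⟨balance s (z' + z), sum_balance s _⟩ ⟨balance s z', sum_balance s _⟩
    rwa [TCdist, ← map_sub, add_sub_cancel_left, dist_eq_norm] at h
  have hlow (i : I) (R : ℕ) (z : V → ℤ) :
      R * TCnorm d (fun x ↦ (v i x : ℝ)) ≤ ‖fwdDiff (R • v i) φ z‖ := by
    refine le_trans ?_ (hφ _ _).1
    rw [map_nsmul, balance_of_sum_eq_zero s (hv i), ← Nat.cast_smul_eq_nsmul ℝ]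
    exact mul_TCnorm_le_TCnorm_smul hd (mod_cast hv i) R.cast_nonneg
  have hedge (x y : V) : TCnorm d (balance s (Pi.single x 1 - Pi.single y 1)) ≤ d x y := by
    rw [balance_of_sum_eq_zero s (by simp)]
    convert TCnorm_single_sub_single_le hd x y using 2
    ext z
    simp [Pi.single_apply]
  refine le_of_forall_pos_le_add fun ε hε ↦ ?_
  obtain ⟨g, hg, hlower⟩ := exists_sum_mul_norm_sum_smul_ge (fun z z' ↦ (hφ z z').2) hα hlow hε
  have hupper := sum_mul_norm_sum_smul_le
    (b := fun j ↦ Pi.single (dst j) 1 - Pi.single (src j) 1)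
    (by simpa [Pi.single_apply, sub_mul, sum_sub_distrib] using h) g
  rw [← sub_le_iff_le_add]
  refine hlower.trans (hupper.trans ?_)
  rw [mul_sum]
  refine sum_le_sum fun j _ ↦ ?_
  have hnorm : ‖∑ y, (Pi.single (dst j) 1 - Pi.single (src j) 1 : V → ℝ) y • g y‖ ≤
      D * d (dst j) (src j) := by
    refine le_of_eq_of_le ?_ ((hg _ _).trans
      (mul_le_mul_of_nonneg_left (hedge (dst j) (src j)) (zero_le_one.trans hD1)))
    simp [Pi.single_apply, sub_smul, sum_sub_distrib]
  exact (mul_le_mul_of_nonneg_left hnorm (hβ j)).trans_eq (mul_left_comm _ _ _)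

end Distortion

/-! ### Walks, slash products and potentials -/

namespace WGraph

variable {G : WGraph}

/-- Connectedness of two vertices by an undirected walk. -/
def Reachable (G : WGraph) (x y : G.V) : Prop := ∃ l, G.IsWalk x y l

lemma isWalk_append {l₁ l₂ : List (G.ι × Bool)} {x y : G.V} :
    G.IsWalk x y (l₁ ++ l₂) ↔ ∃ z, G.IsWalk x z l₁ ∧ G.IsWalk z y l₂ := by
  induction l₁ generalizing x with
  | nil => simp [IsWalk]
  | cons p l ih => simp only [List.cons_append, IsWalk, ih, ← exists_and_left, and_assoc]

lemma isDiWalk_append {l₁ l₂ : List G.ι} {x y : G.V} :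
    G.IsDiWalk x y (l₁ ++ l₂) ↔ ∃ z, G.IsDiWalk x z l₁ ∧ G.IsDiWalk z y l₂ := by
  induction l₁ generalizing x with
  | nil => simp [IsDiWalk]
  | cons e l ih => simp only [List.cons_append, IsDiWalk, ih, ← exists_and_left, and_assoc]

lemma IsDiWalk.isWalk {l : List G.ι} {x y : G.V} (h : G.IsDiWalk x y l) :
    G.IsWalk x y (l.map (·, true)) := by
  induction l generalizing x with
  | nil => exact h
  | cons e l ih => exact ⟨h.1, ih h.2⟩

lemma abs_stepDst_sub_stepSrc (ψ : G.V → ℝ) (p : G.ι × Bool) :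
    |ψ (G.stepDst p) - ψ (G.stepSrc p)| = |ψ (G.dst p.1) - ψ (G.src p.1)| := by
  obtain ⟨e, rfl | rfl⟩ := p
  · simpa [stepDst, stepSrc] using abs_sub_comm _ _
  · simp [stepDst, stepSrc]

lemma abs_sub_le_sum_of_isWalk (ψ : G.V → ℝ) {l : List (G.ι × Bool)} {x y : G.V}
    (h : G.IsWalk x y l) :
    |ψ y - ψ x| ≤ (l.map fun p ↦ |ψ (G.dst p.1) - ψ (G.src p.1)|).sum := by
  induction l generalizing x with
  | nil => simp [show x = y from h]
  | cons p l ih =>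
    rw [List.map_cons, List.sum_cons, ← abs_stepDst_sub_stepSrc, h.1, add_comm]
    exact (abs_sub_le _ _ _).trans (add_le_add_left (ih h.2) _)

lemma abs_sub_le_sum_of_isDiWalk (ψ : G.V → ℝ) {l : List G.ι} {x y : G.V}
    (h : G.IsDiWalk x y l) :
    |ψ y - ψ x| ≤ (l.map fun e ↦ |ψ (G.dst e) - ψ (G.src e)|).sum := by
  simpa [Function.comp_def] using abs_sub_le_sum_of_isWalk ψ h.isWalk

lemma sub_le_gdist (hconn : ∀ x y, G.Reachable x y) {h : G.V → ℝ}
    (hh : ∀ e, |h (G.dst e) - h (G.src e)| ≤ G.len e) (x y : G.V) : h x - h y ≤ G.gdist x y := by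
  obtain ⟨l, hl⟩ := hconn x y
  refine le_csInf ⟨_, l, hl, rfl⟩ ?_
  rintro _ ⟨l, hl, rfl⟩
  calc h x - h y ≤ |h y - h x| := abs_sub_comm (h x) (h y) ▸ le_abs_self _
    _ ≤ (l.map fun p ↦ |h (G.dst p.1) - h (G.src p.1)|).sum := abs_sub_le_sum_of_isWalk h hl
    _ ≤ (l.map fun p ↦ G.len p.1).sum := List.sum_le_sum fun p _ ↦ hh p.1

lemma sum_len_nonneg (hlen : ∀ e, 0 ≤ G.len e) (l : List (G.ι × Bool)) :
    0 ≤ (l.map fun p ↦ G.len p.1).sum :=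
  List.sum_nonneg <| by simpa using fun e _ ↦ hlen e

lemma gdist_nonneg (hlen : ∀ e, 0 ≤ G.len e) (x y : G.V) : 0 ≤ G.gdist x y := by
  refine Real.sInf_nonneg ?_
  rintro _ ⟨l, -, rfl⟩
  exact sum_len_nonneg hlen l

lemma gdist_dst_src_le_len (hlen : ∀ e, 0 ≤ G.len e) (e : G.ι) :
    G.gdist (G.dst e) (G.src e) ≤ G.len e := by
  refine csInf_le ⟨0, ?_⟩ ⟨[(e, false)], ⟨rfl, rfl⟩, by simp⟩
  rintro _ ⟨l, -, rfl⟩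
  exact sum_len_nonneg hlen l

lemma gdist_pos (hconn : ∀ x y, G.Reachable x y) (hlen : ∀ e, 0 < G.len e) {x y : G.V}
    (hxy : x ≠ y) : 0 < G.gdist x y := by
  obtain ⟨c, hc, hcl⟩ := exists_pos_forall_lt hlen
  have hlip := sub_le_gdist hconn (h := Pi.single x c) fun e ↦ by
    simp only [Pi.single_apply]
    split_ifs <;> simp [abs_of_pos hc] <;> linarith [hcl e]
  simpa [hxy.symm] using hc.trans_le (by simpa [hxy.symm] using hlip x y)

lemma exists_isL1Distortion_gdist (hconn : ∀ x y, G.Reachable x y)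
    (hlen : ∀ e, 0 < G.len e) : ∃ D, IsL1Distortion (TCdist G.gdist) D :=
  have : Nonempty G.V := ⟨G.s⟩
  exists_isL1Distortion_TCdist (gdist_nonneg fun e ↦ (hlen e).le) fun _ _ ↦ gdist_pos hconn hlen

lemma IsDiWalk.exists_vertices {l : List G.ι} {x y : G.V} (h : G.IsDiWalk x y l) :
    ∃ v : Fin (l.length + 1) → G.V, v 0 = x ∧ v (Fin.last _) = y ∧
      ∀ i : Fin l.length, G.src (l.get i) = v i.castSucc ∧ G.dst (l.get i) = v i.succ := by
  induction l generalizing x with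
  | nil => exact ⟨fun _ ↦ x, rfl, h, fun i ↦ i.elim0⟩
  | cons e l ih =>
    obtain ⟨v, hv0, hvl, hv⟩ := ih h.2
    exact ⟨Fin.cons x v, rfl, hvl, Fin.cases ⟨h.1, hv0.symm⟩ hv⟩

end WGraph

namespace IsSTGraph

open WGraph

variable {G : WGraph} (hG : IsSTGraph G)

include hG

lemma gdist_self (x : G.V) : G.gdist x x = 0 := by
  simpa [diLen] using hG.dir_geodesic x x [] rfl

lemma nodup_of_isDiWalk {x y : G.V} {l : List G.ι} (h : G.IsDiWalk x y l) : l.Nodup := by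
  induction l generalizing x with
  | nil => exact List.nodup_nil
  | cons e l ih =>
    refine List.nodup_cons.mpr ⟨fun he ↦ ?_, ih h.2⟩
    obtain ⟨l₁, l₂, rfl⟩ := List.append_of_mem he
    obtain ⟨z, hz, hz', -⟩ := isDiWalk_append.mp h.2
    have hcycle : G.IsDiWalk z z (e :: l₁) := ⟨hz', hz⟩
    have hlen : 0 ≤ (l₁.map G.len).sum :=
      List.sum_nonneg <| by simpa using fun e _ ↦ (hG.len_pos e).le
    have hzero := hG.dir_geodesic _ _ _ hcycle
    rw [hG.gdist_self, diLen, List.map_cons, List.sum_cons] at hzero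
    linarith [hG.len_pos e]

lemma exists_isDiWalk_src (e : G.ι) : ∃ l, G.IsDiWalk G.s (G.src e) l := by
  obtain ⟨m, γ, hγ, hth⟩ := hG.th_witness
  obtain ⟨i, hi⟩ : (univ.filter fun i ↦ e ∈ γ i).Nonempty := by
    rw [← card_pos, ← Nat.cast_pos (α := ℝ)]
    exact (div_pos_iff_of_pos_right (by positivity)).mp (hth e ▸ hG.th_pos e)
  obtain ⟨l₁, l₂, hl⟩ := List.append_of_mem (mem_filter.mp hi).2
  obtain ⟨z, hz, rfl, -⟩ := isDiWalk_append.mp (hl ▸ hγ i)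
  exact ⟨l₁, hz⟩

lemma gdist_s_dst_sub_gdist_s_src (e : G.ι) :
    G.gdist G.s (G.dst e) - G.gdist G.s (G.src e) = G.len e := by
  obtain ⟨l, hl⟩ := hG.exists_isDiWalk_src e
  have hle : G.IsDiWalk G.s (G.dst e) (l ++ [e]) := isDiWalk_append.mpr ⟨_, hl, rfl, rfl⟩
  simp [hG.dir_geodesic _ _ _ hl, hG.dir_geodesic _ _ _ hle, diLen]

lemma exists_sum_th_mul_eq_expect : ∃ (m : ℕ) (γ : Fin (m + 1) → List G.ι),
    (∀ i, G.IsDiWalk G.s G.t (γ i)) ∧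
      ∀ x : G.ι → ℝ, ∑ e, G.th e * x e = 𝔼 i, ((γ i).map x).sum := by
  obtain ⟨m, γ, hγ, hth⟩ := hG.th_witness
  refine ⟨m, γ, hγ, fun x ↦ ?_⟩
  have hsum (i : Fin (m + 1)) : ((γ i).map x).sum = ∑ e, if e ∈ γ i then x e else 0 := by
    rw [← List.sum_toFinset x (hG.nodup_of_isDiWalk (hγ i)), ← sum_filter]
    congr 1
    ext e
    simp
  simp only [hsum]
  rw [expect_sum_comm]
  refine sum_congr rfl fun e _ ↦ ?_
  rw [hth, Fintype.expect_eq_sum_div_card, ← sum_filter, sum_const, nsmul_eq_mul,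
    Fintype.card_fin, div_mul_eq_mul_div, Nat.cast_succ]

lemma sum_th_mul_len : ∑ e, G.th e * G.len e = 1 := by
  obtain ⟨m, γ, hγ, hsum⟩ := hG.exists_sum_th_mul_eq_expect
  have hlen (i : Fin (m + 1)) : ((γ i).map G.len).sum = 1 :=
    hG.dist_st ▸ (hG.dir_geodesic _ _ _ (hγ i)).symm
  simp [hsum, hlen]

lemma abs_t_sub_s_le (ψ : G.V → ℝ) :
    |ψ G.t - ψ G.s| ≤ ∑ e, G.th e * |ψ (G.dst e) - ψ (G.src e)| := by
  obtain ⟨m, γ, hγ, hsum⟩ := hG.exists_sum_th_mul_eq_expect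
  rw [hsum]
  exact le_expect univ_nonempty fun i _ ↦ abs_sub_le_sum_of_isDiWalk ψ (hγ i)

lemma exists_abs_sub_s_le (a : G.V) : ∃ K, 0 ≤ K ∧ ∀ ψ : G.V → ℝ,
    |ψ a - ψ G.s| ≤ K * ∑ e, G.th e * |ψ (G.dst e) - ψ (G.src e)| := by
  obtain ⟨l, hl⟩ := hG.conn G.s a
  refine ⟨(l.map fun p ↦ (G.th p.1)⁻¹).sum, List.sum_nonneg ?_, fun ψ ↦ ?_⟩
  · simpa using fun e _ ↦ (hG.th_pos e).le
  refine (abs_sub_le_sum_of_isWalk ψ hl).trans ?_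
  rw [← List.sum_map_mul_right]
  refine List.sum_le_sum fun p _ ↦ (le_inv_mul_iff₀ (hG.th_pos _)).mpr ?_
  exact single_le_sum (f := fun e ↦ G.th e * |ψ (G.dst e) - ψ (G.src e)|)
    (fun e _ ↦ mul_nonneg (hG.th_pos e).le (abs_nonneg _)) (mem_univ p.1)

lemma th_le_one (e : G.ι) : G.th e ≤ 1 := by
  obtain ⟨m, γ, -, hth⟩ := hG.th_witness
  rw [hth, div_le_one (by positivity)]
  exact_mod_cast (card_filter_le _ _).trans_eq (by simp)

lemma exists_th_mul_eq_intCast :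
    ∃ M : ℕ, 0 < M ∧ ∀ e, ∃ k : ℤ, G.th e * M = k := by
  obtain ⟨m, γ, -, hth⟩ := hG.th_witness
  refine ⟨m + 1, m.succ_pos, fun e ↦ ⟨(univ.filter fun i ↦ e ∈ γ i).card, ?_⟩⟩
  rw [hth, Nat.cast_succ, div_mul_cancel₀ _ (by positivity), Int.cast_natCast]

lemma isSTPath_of_forall_mem {l : List G.ι} (hl : G.IsDiWalk G.s G.t l) (hmem : ∀ e, e ∈ l)
    (hth : ∀ e, G.th e = 1) : IsSTPath G := by
  obtain ⟨v, hv0, hvl, hv⟩ := hl.exists_vertices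
  have hmono : StrictMono fun i ↦ G.gdist G.s (v i) := Fin.strictMono_iff_lt_succ.mpr fun i ↦ by
    have := hG.gdist_s_dst_sub_gdist_s_src (l.get i)
    rw [(hv i).1, (hv i).2] at this
    linarith [hG.len_pos (l.get i)]
  have hsurj : Function.Surjective v := fun x ↦ by
    obtain ⟨_ | ⟨⟨e, b⟩, _⟩, hw⟩ := hG.conn x G.s
    · exact ⟨0, hv0.trans hw.symm⟩
    · obtain ⟨i, rfl⟩ := List.mem_iff_get.mp (hmem e)
      cases b
      · exact ⟨_, (hv i).2.symm.trans hw.1⟩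
      · exact ⟨_, (hv i).1.symm.trans hw.1⟩
  exact ⟨l.length, .ofBijective l.get ⟨List.nodup_iff_injective_get.mp (hG.nodup_of_isDiWalk hl),
    fun e ↦ List.mem_iff_get.mp (hmem e)⟩, v,
    ⟨hmono.injective.of_comp (f := G.gdist G.s), hsurj⟩, hv0, hvl, hv, hth⟩

lemma exists_th_lt_one (hnp : ¬ IsSTPath G) : ∃ e, G.th e < 1 := by
  contrapose! hnp
  have hone (e : G.ι) : G.th e = 1 := (hG.th_le_one e).antisymm (hnp e)
  obtain ⟨m, γ, hγ, hth⟩ := hG.th_witness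
  refine hG.isSTPath_of_forall_mem (hγ 0) (fun e ↦ ?_) hone
  have hcard : (univ.filter fun i ↦ e ∈ γ i).card = m + 1 := by
    exact_mod_cast (div_eq_one_iff_eq (by positivity)).mp ((hth e).symm.trans (hone e))
  have huniv : univ.filter (fun i ↦ e ∈ γ i) = univ := eq_univ_of_card _ (by simpa using hcard)
  exact filter_eq_self.mp huniv 0 (mem_univ 0)

end IsSTGraph

namespace WGraph

section Reachable

variable {G H : WGraph}

lemma Reachable.refl (x : G.V) : G.Reachable x x := ⟨[], rfl⟩

lemma Reachable.trans {x y z : G.V} (hxy : G.Reachable x y) (hyz : G.Reachable y z) :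
    G.Reachable x z := by
  obtain ⟨l, hl⟩ := hxy
  obtain ⟨l', hl'⟩ := hyz
  exact ⟨l ++ l', isWalk_append.mpr ⟨y, hl, hl'⟩⟩

lemma reachable_src_dst (e : G.ι) : G.Reachable (G.src e) (G.dst e) := ⟨[(e, true)], rfl, rfl⟩

lemma reachable_dst_src (e : G.ι) : G.Reachable (G.dst e) (G.src e) := ⟨[(e, false)], rfl, rfl⟩

lemma Reachable.map {f : G.V → H.V} (hsrc : ∀ e, H.Reachable (f (G.src e)) (f (G.dst e)))
    (hdst : ∀ e, H.Reachable (f (G.dst e)) (f (G.src e))) {x y : G.V} (hxy : G.Reachable x y) :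
    H.Reachable (f x) (f y) := by
  obtain ⟨l, hl⟩ := hxy
  induction l generalizing x with
  | nil => exact (show x = y from hl) ▸ .refl (f x)
  | cons p l ih =>
    obtain ⟨⟨e, b⟩, rfl, hl⟩ := p, hl
    cases b
    · exact (hdst e).trans (ih hl)
    · exact (hsrc e).trans (ih hl)

end Reachable

section Slash

variable {G H : WGraph}

lemma slashEmbed_s (e : H.ι) : slashEmbed H G e G.s = .inl (H.src e) := by
  simp [slashEmbed]

lemma slashEmbed_t (hst : G.s ≠ G.t) (e : H.ι) : slashEmbed H G e G.t = .inl (H.dst e) := by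
  simp [slashEmbed, hst.symm]

lemma slashEmbed_of_ne (e : H.ι) {v : G.V} (hs : v ≠ G.s) (ht : v ≠ G.t) :
    slashEmbed H G e v = .inr (e, ⟨v, hs, ht⟩) := by
  simp [slashEmbed, hs, ht]

lemma reachable_slashEmbed (e : H.ι) {v w : G.V} (hvw : G.Reachable v w) :
    (H.slash G).Reachable (slashEmbed H G e v) (slashEmbed H G e w) :=
  hvw.map (fun e' ↦ reachable_src_dst (G := H.slash G) (e, e'))
    fun e' ↦ reachable_dst_src (G := H.slash G) (e, e')

lemma reachable_inl (hst : G.s ≠ G.t) (hG : ∀ v w, G.Reachable v w) {x y : H.V}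
    (hxy : H.Reachable x y) : (H.slash G).Reachable (.inl x) (.inl y) := by
  refine hxy.map (H := H.slash G) (f := Sum.inl) (fun e ↦ ?_) fun e ↦ ?_
  · simpa only [slashEmbed_s, slashEmbed_t hst] using reachable_slashEmbed e (hG G.s G.t)
  · simpa only [slashEmbed_s, slashEmbed_t hst] using reachable_slashEmbed e (hG G.t G.s)

lemma reachable_slash (hst : G.s ≠ G.t) (hH : ∀ x y, H.Reachable x y)
    (hG : ∀ v w, G.Reachable v w) (x y : (H.slash G).V) : (H.slash G).Reachable x y := by
  have hinl (x : (H.slash G).V) : ∃ z : H.V, (H.slash G).Reachable x (.inl z) ∧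
      (H.slash G).Reachable (.inl z) x := by
    rcases x with z | ⟨e, v, hs, ht⟩
    · exact ⟨z, .refl _, .refl _⟩
    · rw [← slashEmbed_of_ne e hs ht]
      exact ⟨H.src e, slashEmbed_s (G := G) e ▸ reachable_slashEmbed e (hG _ _),
        slashEmbed_s (G := G) e ▸ reachable_slashEmbed e (hG _ _)⟩
  obtain ⟨x', hx, -⟩ := hinl x
  obtain ⟨y', -, hy⟩ := hinl y
  exact (hx.trans (reachable_inl hst hG (hH x' y'))).trans hy

lemma sum_slash_ι (f : (H.slash G).ι → ℝ) : ∑ p, f p = ∑ e : H.ι, ∑ e' : G.ι, f (e, e') :=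
  Fintype.sum_prod_type f

end Slash

lemma card_slashPow_ι (G : WGraph) (n : ℕ) :
    Fintype.card (G.slashPow n).ι = Fintype.card G.ι ^ n := by
  induction n with
  | zero => rfl
  | succ n ih => rw [pow_succ, ← ih]; exact Fintype.card_prod _ _

lemma card_slashPow_V_le (G : WGraph) (n : ℕ) :
    Fintype.card (G.slashPow n).V ≤ (Fintype.card G.ι + Fintype.card G.V + 2) ^ (n + 1) := by
  set B := Fintype.card G.ι + Fintype.card G.V + 2
  induction n with
  | zero => exact le_add_self.trans_eq (pow_one B).symm
  | succ n ih =>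
    calc Fintype.card (G.slashPow (n + 1)).V
        = Fintype.card (G.slashPow n).V +
            Fintype.card G.ι ^ n * Fintype.card {v : G.V // v ≠ G.s ∧ v ≠ G.t} := by
          rw [← card_slashPow_ι, ← Fintype.card_prod]
          exact Fintype.card_sum
      _ ≤ B ^ (n + 1) + B ^ n * B := by
          gcongr
          · omega
          · exact (Fintype.card_subtype_le _).trans (by omega)
      _ = B ^ (n + 1) * 2 := by ring
      _ ≤ B ^ (n + 1 + 1) := by
          rw [pow_succ B (n + 1)]
          gcongr
          omega

lemma exists_log_card_slashPow_V_le (G : WGraph) :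
    ∃ b > 0, ∀ n : ℕ, Real.log (Fintype.card (G.slashPow n).V) ≤ (n + 1) * b := by
  refine ⟨Real.log ↑(Fintype.card G.ι + Fintype.card G.V + 2),
    Real.log_pos (by norm_cast; omega), fun n ↦ ?_⟩
  have : Nonempty (G.slashPow n).V := ⟨(G.slashPow n).s⟩
  rw [← Nat.cast_succ, ← Real.log_pow]
  exact Real.log_le_log (mod_cast Fintype.card_pos) (mod_cast card_slashPow_V_le G n)

lemma exists_slashPow_th_mul_eq_intCast {G : WGraph} {M : ℝ}
    (hM : ∀ e, ∃ k : ℤ, G.th e * M = k) (n : ℕ) (e : (G.slashPow n).ι) :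
    ∃ k : ℤ, (G.slashPow n).th e * M ^ n = k := by
  induction n with
  | zero => exact ⟨1, by simp [slashPow, edgeGraph]⟩
  | succ n ih =>
    obtain ⟨k, hk⟩ := ih e.1
    obtain ⟨k', hk'⟩ := hM e.2
    refine ⟨k * k', ?_⟩
    rw [Int.cast_mul, ← hk, ← hk', pow_succ]
    exact mul_mul_mul_comm _ _ _ _

end WGraph

namespace IsSTGraph

open WGraph

variable {G H : WGraph} (hG : IsSTGraph G)

include hG

lemma sum_slash_th_mul_len_mul (f : H.ι → ℝ) :
    ∑ p, (H.slash G).th p * (H.slash G).len p * f p.1 = ∑ e, H.th e * H.len e * f e := by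
  rw [sum_slash_ι]
  refine sum_congr rfl fun e _ ↦ ?_
  rw [← mul_one (H.th e * H.len e * f e), ← hG.sum_th_mul_len, mul_sum]
  refine sum_congr rfl fun e' _ ↦ ?_
  simp only [slash]
  ring

lemma slashPow_reachable (n : ℕ) (x y : (G.slashPow n).V) : (G.slashPow n).Reachable x y := by
  induction n with
  | zero =>
    cases x <;> cases y
    exacts [.refl _, reachable_src_dst (), reachable_dst_src (), .refl _]
  | succ n ih => exact reachable_slash hG.s_ne_t ih hG.conn x y

lemma slashPow_len_pos (n : ℕ) (e : (G.slashPow n).ι) : 0 < (G.slashPow n).len e := by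
  induction n with
  | zero => exact one_pos
  | succ n ih => exact mul_pos (ih _) (hG.len_pos _)

lemma slashPow_th_pos (n : ℕ) (e : (G.slashPow n).ι) : 0 < (G.slashPow n).th e := by
  induction n with
  | zero => exact one_pos
  | succ n ih => exact mul_pos (ih _) (hG.th_pos _)

lemma sum_slashPow_th_mul_len (n : ℕ) :
    ∑ e, (G.slashPow n).th e * (G.slashPow n).len e = 1 := by
  induction n with
  | zero => exact (Fintype.sum_unique (ι := Unit) _).trans (one_mul 1)
  | succ n ih =>
    have h := hG.sum_slash_th_mul_len_mul (H := G.slashPow n) 1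
    simp only [Pi.one_apply, mul_one, ih] at h
    exact h

end IsSTGraph

namespace WGraph

variable {G H : WGraph}

/-- The edges of thickness at most `η`. -/
noncomputable def thinEdges (H : WGraph) (η : ℝ) : Finset H.ι := univ.filter fun e ↦ H.th e ≤ η

lemma mem_thinEdges {η : ℝ} {e : H.ι} : e ∈ H.thinEdges η ↔ H.th e ≤ η := by simp [thinEdges]

/-- The edges of `H ⊘ G` in the copies of `G` that replace edges of `H` of thickness at most `η`. -/
noncomputable def thinCopies (H G : WGraph) (η : ℝ) : Finset (H.slash G).ι :=
  H.thinEdges η ×ˢ (univ : Finset G.ι)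

lemma mem_thinCopies {η : ℝ} {p : (H.slash G).ι} : p ∈ thinCopies H G η ↔ H.th p.1 ≤ η := by
  rw [← mem_thinEdges]
  exact mem_product.trans (and_iff_left (mem_univ p.2))

lemma sum_thinCopies (η : ℝ) (f : (H.slash G).ι → ℝ) :
    ∑ p ∈ thinCopies H G η, f p = ∑ e ∈ H.thinEdges η, ∑ e' : G.ι, f (e, e') :=
  sum_product (H.thinEdges η) (univ : Finset G.ι) f

/-- The energy of `g` on a set of edges: its total variation weighted by the thickness. -/
noncomputable def energy (H : WGraph) (c : Finset H.ι) (g : H.V → ℝ) : ℝ :=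
  ∑ e ∈ c, H.th e * |g (H.dst e) - g (H.src e)|

/-- The mass of a set of edges for the probability with weights `th e * len e` on the edges. -/
noncomputable def mass (H : WGraph) (c : Finset H.ι) : ℝ := ∑ e ∈ c, H.th e * H.len e

/-- The extension of `h : H.V → ℝ` to `H ⊘ G` by interpolation along the copies of `G`, plus a
bump of size `σ e` at the vertex `a` of the copy replacing `e`. -/
noncomputable def slashExtend (h : H.V → ℝ) (σ : H.ι → ℝ) (a : G.V) : (H.slash G).V → ℝ :=
  Sum.elim h fun p ↦ h (H.src p.1) + (h (H.dst p.1) - h (H.src p.1)) * G.gdist G.s p.2 +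
    (Pi.single a (σ p.1) : G.V → ℝ) p.2

lemma th_mul_abs_inr_sub_le {e : H.ι} {K : ℝ} (a : {v : G.V // v ≠ G.s ∧ v ≠ G.t})
    (hK : ∀ ψ : G.V → ℝ, |ψ a - ψ G.s| ≤ K * G.energy univ ψ) (he : 0 ≤ H.th e)
    (g : (H.slash G).V → ℝ) :
    H.th e * |g (.inr (e, a)) - g (.inl (H.src e))| ≤ K * ∑ e', (H.slash G).th (e, e') *
      |g ((H.slash G).dst (e, e')) - g ((H.slash G).src (e, e'))| := by
  have h := hK fun v ↦ g (slashEmbed H G e v)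
  rw [slashEmbed_s, slashEmbed_of_ne e a.2.1 a.2.2] at h
  simpa only [slash, energy, mul_sum, mul_assoc, mul_left_comm (H.th e)] using
    mul_le_mul_of_nonneg_left h he

lemma slashExtend_inr_sub {h : H.V → ℝ} {σ : H.ι → ℝ} {a : {v : G.V // v ≠ G.s ∧ v ≠ G.t}}
    {e : H.ι} (hh : h (H.dst e) = h (H.src e)) :
    slashExtend h σ a.1 (.inr (e, a) : (H.slash G).V) - h (H.src e) = σ e := by
  simp [slashExtend, hh]

end WGraph

namespace IsSTGraph

open WGraph

variable {G H : WGraph} (hG : IsSTGraph G)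

include hG

lemma mass_thinCopies (η : ℝ) : (H.slash G).mass (thinCopies H G η) = H.mass (H.thinEdges η) := by
  have h := hG.sum_slash_th_mul_len_mul (H := H) fun e ↦ if H.th e ≤ η then 1 else 0
  have hthin : thinCopies H G η = univ.filter fun p ↦ H.th p.1 ≤ η := by
    ext p
    simp [mem_thinCopies]
  simpa only [mass, hthin, thinEdges, sum_filter, mul_ite, mul_one, mul_zero] using h

lemma th_mul_abs_inl_dst_sub_le {e : H.ι} (he : 0 ≤ H.th e) (g : (H.slash G).V → ℝ) :
    H.th e * |g (.inl (H.dst e)) - g (.inl (H.src e))| ≤ ∑ e', (H.slash G).th (e, e') *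
      |g ((H.slash G).dst (e, e')) - g ((H.slash G).src (e, e'))| := by
  have h := hG.abs_t_sub_s_le fun v ↦ g (slashEmbed H G e v)
  rw [slashEmbed_s, slashEmbed_t hG.s_ne_t] at h
  simpa only [slash, mul_sum, mul_assoc] using mul_le_mul_of_nonneg_left h he

section SlashExtend

variable {h : H.V → ℝ} {σ : H.ι → ℝ} {a : G.V}

lemma slashExtend_slashEmbed (has : a ≠ G.s) (hat : a ≠ G.t) (e : H.ι) (v : G.V) :
    slashExtend h σ a (slashEmbed H G e v) = h (H.src e) +
      (h (H.dst e) - h (H.src e)) * G.gdist G.s v + (Pi.single a (σ e) : G.V → ℝ) v := by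
  rcases eq_or_ne v G.s with rfl | hs
  · simp [slashEmbed_s, slashExtend, hG.gdist_self, has.symm]
  rcases eq_or_ne v G.t with rfl | ht
  · simp [slashEmbed_t hG.s_ne_t, slashExtend, hG.dist_st, hat.symm]
  · simp [slashEmbed_of_ne e hs ht, slashExtend]

lemma slashExtend_dst_sub_src (has : a ≠ G.s) (hat : a ≠ G.t) (p : (H.slash G).ι) :
    slashExtend h σ a ((H.slash G).dst p) - slashExtend h σ a ((H.slash G).src p) =
      (h (H.dst p.1) - h (H.src p.1)) * G.len p.2 + ((Pi.single a (σ p.1) : G.V → ℝ) (G.dst p.2) -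
        (Pi.single a (σ p.1) : G.V → ℝ) (G.src p.2)) := by
  simp only [slash, hG.slashExtend_slashEmbed has hat, ← hG.gdist_s_dst_sub_gdist_s_src p.2]
  ring

lemma abs_slashExtend_sub_le (has : a ≠ G.s) (hat : a ≠ G.t)
    (hh : ∀ e, |h (H.dst e) - h (H.src e)| ≤ H.len e)
    (hσ : ∀ e, σ e = 0 ∨ h (H.dst e) = h (H.src e))
    (hσle : ∀ e e', |σ e| ≤ H.len e * G.len e') (p : (H.slash G).ι) :
    |slashExtend h σ a ((H.slash G).dst p) - slashExtend h σ a ((H.slash G).src p)| ≤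
      (H.slash G).len p := by
  rw [hG.slashExtend_dst_sub_src has hat]
  rcases hσ p.1 with h0 | h0
  · rw [h0, Pi.single_zero, Pi.zero_apply, Pi.zero_apply, sub_self, add_zero, abs_mul,
      abs_of_pos (hG.len_pos _)]
    exact mul_le_mul_of_nonneg_right (hh _) (hG.len_pos _).le
  · rw [h0, sub_self, zero_mul, zero_add]
    refine le_trans ?_ (hσle p.1 p.2)
    simp only [Pi.single_apply]
    split_ifs <;> simp

lemma slashExtend_dst_eq_src (has : a ≠ G.s) (hat : a ≠ G.t) {p : (H.slash G).ι}
    (hh : h (H.dst p.1) = h (H.src p.1)) (hσ : σ p.1 = 0) :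
    slashExtend h σ a ((H.slash G).dst p) = slashExtend h σ a ((H.slash G).src p) := by
  rw [← sub_eq_zero, hG.slashExtend_dst_sub_src has hat, hh, hσ]
  simp

end SlashExtend

end IsSTGraph

/-! ### Families of molecules -/

/-- A finite family of weighted molecules `δ_{fst w} - δ_{snd w}` on `V`, where `height w` is the
difference between `fst w` and `snd w` that a norming function is asked to attain. -/
structure MoleculeFamily (V : Type*) where
  Idx : Type
  [fintypeIdx : Fintype Idx]
  [decidableEqIdx : DecidableEq Idx]
  fst : Idx → V
  snd : Idx → V
  weight : Idx → ℝ
  height : Idx → ℝ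

attribute [instance] MoleculeFamily.fintypeIdx MoleculeFamily.decidableEqIdx

namespace MoleculeFamily

open WGraph

variable {G H : WGraph}

/-- Adds to a family on `H`, for each edge `e ∈ s`, the molecule joining the source of `e` to the
vertex `a` of the copy of `G` that replaces `e` in `H ⊘ G`. -/
def slash (F : MoleculeFamily H.V) (s : Finset H.ι) (a : {v : G.V // v ≠ G.s ∧ v ≠ G.t}) (c₀ : ℝ) :
    MoleculeFamily (H.slash G).V where
  Idx := F.Idx ⊕ s
  fst := Sum.elim (fun w ↦ .inl (F.fst w)) fun e ↦ .inr (e, a)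
  snd := Sum.elim (fun w ↦ .inl (F.snd w)) fun e ↦ .inl (H.src e)
  weight := Sum.elim F.weight fun e ↦ H.th e
  height := Sum.elim F.height fun e ↦ c₀ * H.len e

lemma sum_slash_idx {F : MoleculeFamily H.V} {s : Finset H.ι}
    {a : {v : G.V // v ≠ G.s ∧ v ≠ G.t}} {c₀ : ℝ} (f : (F.slash s a c₀).Idx → ℝ) :
    ∑ w, f w = ∑ w, f (.inl w) + ∑ e, f (.inr e) := Fintype.sum_sum_type f

/-- `h` is a `1`-Lipschitz function that varies only along the edges in `c` and attains the heights
of the molecules of `F` with the signs `ε`. -/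
structure IsNorming (F : MoleculeFamily H.V) (c : Finset H.ι) (ε : F.Idx → ℤˣ) (h : H.V → ℝ) :
    Prop where
  abs_sub_le : ∀ e, |h (H.dst e) - h (H.src e)| ≤ H.len e
  dst_eq_src : ∀ e ∉ c, h (H.dst e) = h (H.src e)
  fst_sub_snd : ∀ w, h (F.fst w) - h (F.snd w) = (ε w : ℤ) * F.height w

/-- The molecules of `F` have weights comparable to `η` and integral after multiplication by `M`,
energy controlled by the edges in `c` and total weighted height at least `c₀ * H.mass c`, and their
heights are attained simultaneously for every choice of signs. -/
structure IsTestFamily (F : MoleculeFamily H.V) (c : Finset H.ι) (τ η K M c₀ : ℝ) : Prop where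
  le_weight : ∀ w, τ * η ≤ F.weight w
  weight_le : ∀ w, F.weight w ≤ η
  weight_mul_eq_intCast : ∀ w, ∃ k : ℤ, F.weight w * M = k
  sum_weight_mul_le : ∀ g : H.V → ℝ,
    ∑ w, F.weight w * |g (F.fst w) - g (F.snd w)| ≤ K * H.energy c g
  le_sum_weight_mul_height : c₀ * H.mass c ≤ ∑ w, F.weight w * F.height w
  exists_isNorming : ∀ ε, ∃ h, F.IsNorming c ε h

section Slash

variable {F : MoleculeFamily H.V} {c : Finset H.ι} {a : {v : G.V // v ≠ G.s ∧ v ≠ G.t}}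
  {τ η K M M' c₀ : ℝ} (hG : IsSTGraph G)

include hG

lemma sum_slash_weight_mul_le (hth : ∀ e, 0 ≤ H.th e) (hK : 0 ≤ K)
    (hKa : ∀ ψ : G.V → ℝ, |ψ a - ψ G.s| ≤ K * G.energy univ ψ) (hc : c ⊆ H.thinEdges η)
    (hF : ∀ g : H.V → ℝ, ∑ w, F.weight w * |g (F.fst w) - g (F.snd w)| ≤ K * H.energy c g)
    (g : (H.slash G).V → ℝ) :
    ∑ w, (F.slash (H.thinEdges η \ c) a c₀).weight w *
        |g ((F.slash (H.thinEdges η \ c) a c₀).fst w) -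
          g ((F.slash (H.thinEdges η \ c) a c₀).snd w)| ≤
      K * (H.slash G).energy (thinCopies H G η) g := by
  set E : H.ι → ℝ := fun e ↦ ∑ e', (H.slash G).th (e, e') *
    |g ((H.slash G).dst (e, e')) - g ((H.slash G).src (e, e'))|
  calc _ = ∑ w, F.weight w * |g (.inl (F.fst w)) - g (.inl (F.snd w))| +
          ∑ e ∈ H.thinEdges η \ c, H.th e * |g (.inr (e, a)) - g (.inl (H.src e))| := by
        rw [sum_slash_idx]
        exact congrArg _ (sum_coe_sort (H.thinEdges η \ c)
          fun e ↦ H.th e * |g (.inr (e, a)) - g (.inl (H.src e))|)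
    _ ≤ K * ∑ e ∈ c, E e + ∑ e ∈ H.thinEdges η \ c, K * E e :=
        add_le_add ((hF fun x ↦ g (.inl x)).trans (mul_le_mul_of_nonneg_left
            (sum_le_sum fun e _ ↦ hG.th_mul_abs_inl_dst_sub_le (hth e) g) hK))
          (sum_le_sum fun e _ ↦ th_mul_abs_inr_sub_le a hKa (hth e) g)
    _ = _ := by
        rw [← mul_sum, ← mul_add, add_comm, sum_sdiff hc, energy, sum_thinCopies]

lemma le_sum_slash_weight_mul_height (hc : c ⊆ H.thinEdges η)
    (hF : c₀ * H.mass c ≤ ∑ w, F.weight w * F.height w) :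
    c₀ * (H.slash G).mass (thinCopies H G η) ≤ ∑ w, (F.slash (H.thinEdges η \ c) a c₀).weight w *
      (F.slash (H.thinEdges η \ c) a c₀).height w := by
  calc _ = c₀ * H.mass (H.thinEdges η \ c) + c₀ * H.mass c := by
        rw [hG.mass_thinCopies, ← mul_add, mass, mass, mass, sum_sdiff hc]
    _ ≤ ∑ e ∈ H.thinEdges η \ c, H.th e * (c₀ * H.len e) + ∑ w, F.weight w * F.height w := by
        rw [mass, mul_sum]
        simp only [mul_left_comm c₀]
        gcongr
    _ = _ := by
        rw [sum_slash_idx, add_comm]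
        exact congrArg _ (sum_coe_sort (H.thinEdges η \ c) fun e ↦ H.th e * (c₀ * H.len e)).symm

lemma IsNorming.exists_slash {ε : (F.slash (H.thinEdges η \ c) a c₀).Idx → ℤˣ} {h : H.V → ℝ}
    (hh : F.IsNorming c (fun w ↦ ε (.inl w)) h) (hlen : ∀ e, 0 ≤ H.len e) (hc₀ : 0 ≤ c₀)
    (hc₀G : ∀ e, c₀ ≤ G.len e) (hc : c ⊆ H.thinEdges η) :
    ∃ h', (F.slash (H.thinEdges η \ c) a c₀).IsNorming (thinCopies H G η) ε h' := by
  let σ (e : H.ι) : ℝ :=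
    if he : e ∈ H.thinEdges η \ c then (ε (.inr ⟨e, he⟩) : ℤ) * (c₀ * H.len e) else 0
  have hσ0 {e} (he : e ∉ H.thinEdges η \ c) : σ e = 0 := dif_neg he
  have hσ (e) : σ e = 0 ∨ h (H.dst e) = h (H.src e) := by
    by_cases he : e ∈ H.thinEdges η \ c
    · exact .inr (hh.dst_eq_src e (mem_sdiff.mp he).2)
    · exact .inl (hσ0 he)
  have hσle (e e') : |σ e| ≤ H.len e * G.len e' := by
    by_cases he : e ∈ H.thinEdges η \ c
    · simp only [σ, dif_pos he, abs_mul, abs_of_nonneg hc₀, abs_of_nonneg (hlen e)]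
      rw [← Int.cast_abs, Int.isUnit_iff_abs_eq.mp (Units.isUnit _), Int.cast_one, one_mul,
        mul_comm]
      exact mul_le_mul_of_nonneg_left (hc₀G e') (hlen e)
    · rw [hσ0 he, abs_zero]
      exact mul_nonneg (hlen e) (hG.len_pos e').le
  refine ⟨slashExtend h σ a, hG.abs_slashExtend_sub_le a.2.1 a.2.2 hh.abs_sub_le hσ hσle,
    fun p hp ↦ ?_, ?_⟩
  · have hp' : p.1 ∉ H.thinEdges η := by rwa [mem_thinEdges, ← mem_thinCopies]
    exact hG.slashExtend_dst_eq_src a.2.1 a.2.2 (hh.dst_eq_src _ fun h ↦ hp' (hc h))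
      (hσ0 fun h ↦ hp' (mem_sdiff.mp h).1)
  · rintro (w | ⟨e, he⟩)
    · exact hh.fst_sub_snd w
    · exact (slashExtend_inr_sub (hh.dst_eq_src e (mem_sdiff.mp he).2)).trans (dif_pos he)

lemma IsTestFamily.slash (hF : F.IsTestFamily c τ η K M c₀) (hlen : ∀ e, 0 ≤ H.len e)
    (hth : ∀ e, 0 ≤ H.th e) (hK : 0 ≤ K)
    (hKa : ∀ ψ : G.V → ℝ, |ψ a - ψ G.s| ≤ K * G.energy univ ψ) (hc₀ : 0 ≤ c₀)
    (hc₀G : ∀ e, c₀ ≤ G.len e) (hM : ∀ e, ∃ k : ℤ, H.th e * M = k) (hM' : ∃ k : ℤ, M' = k)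
    (hc : c ⊆ H.thinEdges η) (hcτ : ∀ e ∉ c, τ * η ≤ H.th e) :
    (F.slash (H.thinEdges η \ c) a c₀).IsTestFamily (thinCopies H G η) τ η K (M * M') c₀ where
  le_weight := by
    rintro (w | ⟨e, he⟩)
    · exact hF.le_weight w
    · exact hcτ e (mem_sdiff.mp he).2
  weight_le := by
    rintro (w | ⟨e, he⟩)
    · exact hF.weight_le w
    · exact mem_thinEdges.mp (mem_sdiff.mp he).1
  weight_mul_eq_intCast := by
    obtain ⟨k', rfl⟩ := hM'
    rintro (w | ⟨e, -⟩)
    · obtain ⟨k, hk⟩ := hF.weight_mul_eq_intCast w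
      exact ⟨k * k', by rw [← mul_assoc, Int.cast_mul, ← hk]; rfl⟩
    · obtain ⟨k, hk⟩ := hM e
      exact ⟨k * k', by rw [← mul_assoc, Int.cast_mul, ← hk]; rfl⟩
  sum_weight_mul_le := sum_slash_weight_mul_le hG hth hK hKa hc hF.sum_weight_mul_le
  le_sum_weight_mul_height := le_sum_slash_weight_mul_height hG hc hF.le_sum_weight_mul_height
  exists_isNorming ε :=
    have ⟨_, hh⟩ := hF.exists_isNorming fun w ↦ ε (.inl w)
    hh.exists_slash hG hlen hc₀ hc₀G hc

end Slash

end MoleculeFamily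

namespace WGraph

variable {G : WGraph}

/-- The edges of `G^{⊘n}` along which the test family of scale `η` may vary. -/
noncomputable def coveredEdges (G : WGraph) (η : ℝ) : (n : ℕ) → Finset (G.slashPow n).ι
  | 0 => ∅
  | n + 1 => thinCopies (G.slashPow n) G η

lemma mem_coveredEdges_succ {η : ℝ} {n : ℕ} {p : (G.slashPow (n + 1)).ι} :
    p ∈ G.coveredEdges η (n + 1) ↔ (G.slashPow n).th (Prod.fst p) ≤ η := mem_thinCopies

end WGraph

namespace IsSTGraph

open WGraph

variable {G : WGraph} (hG : IsSTGraph G)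

include hG

lemma coveredEdges_subset_thinEdges (η : ℝ) (n : ℕ) :
    G.coveredEdges η n ⊆ (G.slashPow n).thinEdges η := by
  cases n with
  | zero => exact empty_subset _
  | succ n =>
    exact fun p hp ↦ mem_thinEdges.mpr ((mul_le_of_le_one_right (hG.slashPow_th_pos n _).le
      (hG.th_le_one _)).trans (mem_coveredEdges_succ.mp hp))

lemma mul_le_th_of_notMem_coveredEdges {τ η : ℝ} (hτ0 : 0 ≤ τ) (hτ : ∀ e, τ ≤ G.th e)
    (hτη : τ * η ≤ 1) {n : ℕ} {e : (G.slashPow n).ι} (he : e ∉ G.coveredEdges η n) :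
    τ * η ≤ (G.slashPow n).th e := by
  cases n with
  | zero => exact hτη
  | succ n =>
    rw [mem_coveredEdges_succ, not_le] at he
    rw [mul_comm]
    exact mul_le_mul he.le (hτ e.2) hτ0 (hG.slashPow_th_pos n _).le

lemma exists_isTestFamily {a : {v : G.V // v ≠ G.s ∧ v ≠ G.t}} {τ η K c₀ : ℝ} {M : ℕ} (hK : 0 ≤ K)
    (hKa : ∀ ψ : G.V → ℝ, |ψ a - ψ G.s| ≤ K * G.energy univ ψ) (hc₀ : 0 ≤ c₀)
    (hc₀G : ∀ e, c₀ ≤ G.len e) (hτ0 : 0 ≤ τ) (hτ : ∀ e, τ ≤ G.th e) (hτη : τ * η ≤ 1)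
    (hM : ∀ e, ∃ k : ℤ, G.th e * M = k) (n : ℕ) : ∃ F : MoleculeFamily (G.slashPow n).V,
      F.IsTestFamily (G.coveredEdges η n) τ η K (M ^ n) c₀ := by
  induction n with
  | zero =>
    refine ⟨⟨Empty, Empty.elim, Empty.elim, Empty.elim, Empty.elim⟩, nofun, nofun, nofun,
      fun g ↦ ?_, ?_,
      fun ε ↦ ⟨0, fun e ↦ ?_, fun _ _ ↦ rfl, nofun⟩⟩
    · simp [coveredEdges, energy]
    · simp [coveredEdges, mass]
    · simpa using (hG.slashPow_len_pos 0 e).le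
  | succ n ih =>
    obtain ⟨F, hF⟩ := ih
    exact ⟨_, hF.slash hG (fun e ↦ (hG.slashPow_len_pos n e).le)
      (fun e ↦ (hG.slashPow_th_pos n e).le) hK hKa hc₀ hc₀G
      (exists_slashPow_th_mul_eq_intCast hM n) ⟨M, rfl⟩ (hG.coveredEdges_subset_thinEdges η n)
      fun e ↦ hG.mul_le_th_of_notMem_coveredEdges hτ0 hτ hτη⟩

end IsSTGraph

namespace WGraph

variable {G : WGraph}

/-- An edge of `G^{⊘n}` is a choice of `n` edges of `G`: the number of these of thickness at most
`θ`. -/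
noncomputable def thinCount (G : WGraph) (θ : ℝ) : (n : ℕ) → (G.slashPow n).ι → ℕ
  | 0, _ => 0
  | n + 1, e => G.thinCount θ n (Prod.fst e) + if G.th (Prod.snd e) ≤ θ then 1 else 0

lemma thinCount_le (θ : ℝ) (n : ℕ) (e : (G.slashPow n).ι) : G.thinCount θ n e ≤ n := by
  induction n with
  | zero => exact le_rfl
  | succ n ih => exact add_le_add (ih _) (by split_ifs <;> simp)

end WGraph

namespace IsSTGraph

open WGraph

variable {G : WGraph} (hG : IsSTGraph G)

include hG

lemma slashPow_th_le_pow_thinCount {θ : ℝ} (hθ : 0 ≤ θ) (n : ℕ) (e : (G.slashPow n).ι) :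
    (G.slashPow n).th e ≤ θ ^ G.thinCount θ n e := by
  induction n with
  | zero => exact (pow_zero θ).ge
  | succ n ih =>
    rw [thinCount, pow_add]
    refine mul_le_mul (ih _) ?_ (hG.th_pos _).le (pow_nonneg hθ _)
    split_ifs with h
    · rwa [pow_one]
    · exact (hG.th_le_one _).trans_eq (pow_zero θ).symm

lemma sum_th_mul_len_mul_thinCount (θ : ℝ) (n : ℕ) :
    ∑ e, (G.slashPow n).th e * (G.slashPow n).len e * G.thinCount θ n e =
      n * G.mass (G.thinEdges θ) := by
  induction n with
  | zero => simp [thinCount]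
  | succ n ih =>
    set p := G.mass (G.thinEdges θ) with hp
    rw [mass, thinEdges, sum_filter] at hp
    set H := G.slashPow n
    calc ∑ e : (H.slash G).ι, (H.slash G).th e * (H.slash G).len e * G.thinCount θ (n + 1) e
        = ∑ e : (H.slash G).ι, (H.slash G).th e * (H.slash G).len e * G.thinCount θ n e.1 +
            ∑ e, ∑ e', H.th e * H.len e * if G.th e' ≤ θ then G.th e' * G.len e' else 0 := by
          rw [← sum_slash_ι fun p ↦ H.th p.1 * H.len p.1 *
            if G.th p.2 ≤ θ then G.th p.2 * G.len p.2 else 0, ← sum_add_distrib]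
          refine sum_congr rfl fun e _ ↦ ?_
          simp only [thinCount, slash]
          split_ifs <;> push_cast <;> ring
      _ = n * p + p := by
          rw [hG.sum_slash_th_mul_len_mul fun e ↦ (G.thinCount θ n e : ℝ), ih, ← sum_mul_sum, ← hp,
            hG.sum_slashPow_th_mul_len, one_mul]
      _ = _ := by
          push_cast
          ring

/-- An edge of `G^{⊘n}` with `k` thin choices has thickness at most `θ ^ k`, hence is counted at the
first `k` scales. -/
lemma mul_mass_thinEdges_le {θ : ℝ} (hθ0 : 0 ≤ θ) (hθ1 : θ ≤ 1) (n : ℕ) :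
    n * G.mass (G.thinEdges θ) ≤
      ∑ j : Fin n, (G.slashPow (n + 1)).mass (G.coveredEdges (θ ^ (j : ℕ)) (n + 1)) := by
  set H := G.slashPow n
  have hcount (e : H.ι) :
      (G.thinCount θ n e : ℝ) ≤ ∑ j ∈ range n, if H.th e ≤ θ ^ j then 1 else 0 := by
    rw [sum_boole, Nat.cast_le, ← card_range (G.thinCount θ n e)]
    refine card_le_card fun j hj ↦ mem_filter.mpr ⟨range_mono (thinCount_le θ n e) hj, ?_⟩
    exact (hG.slashPow_th_le_pow_thinCount hθ0 n e).trans
      (pow_le_pow_of_le_one hθ0 hθ1 (mem_range.mp hj).le)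
  calc n * G.mass (G.thinEdges θ) = ∑ e, H.th e * H.len e * G.thinCount θ n e :=
        (hG.sum_th_mul_len_mul_thinCount θ n).symm
    _ ≤ ∑ e, H.th e * H.len e * ∑ j ∈ range n, if H.th e ≤ θ ^ j then 1 else 0 :=
        sum_le_sum fun e _ ↦ mul_le_mul_of_nonneg_left (hcount e)
          (mul_pos (hG.slashPow_th_pos n e) (hG.slashPow_len_pos n e)).le
    _ = ∑ j ∈ range n, H.mass (H.thinEdges (θ ^ j)) := by
        simp only [mul_sum, mul_ite, mul_one, mul_zero]
        rw [sum_comm]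
        simp only [mass, thinEdges, sum_filter]
    _ = _ := by
        rw [← Fin.sum_univ_eq_sum_range fun j ↦ H.mass (H.thinEdges (θ ^ j))]
        exact sum_congr rfl fun j _ ↦ (hG.mass_thinCopies _).symm

end IsSTGraph

namespace MoleculeFamily

open WGraph

section SignedSum

variable {V : Type*} [DecidableEq V]

/-- The sum of the molecules of a family with multiplicities `T` and signs `ε`. -/
def signedSum (F : MoleculeFamily V) (T : F.Idx → ℤ) (ε : F.Idx → ℤˣ) : V → ℤ :=
  ∑ w, (ε w * T w : ℤ) • (Pi.single (F.fst w) 1 - Pi.single (F.snd w) 1)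

lemma sum_signedSum_mul [Fintype V] {R : Type*} [CommRing R] (F : MoleculeFamily V)
    (T : F.Idx → ℤ) (ε : F.Idx → ℤˣ) (g : V → R) :
    ∑ x, (F.signedSum T ε x : R) * g x =
      ∑ w, ((ε w : ℤ) : R) * (T w * (g (F.fst w) - g (F.snd w))) := by
  simp only [signedSum, Finset.sum_apply, Pi.smul_apply, Pi.sub_apply, smul_eq_mul, Int.cast_sum,
    Int.cast_mul, Int.cast_sub, sum_mul]
  rw [sum_comm]
  simp only [mul_assoc, sub_mul, ← mul_sum, sum_sub_distrib, Pi.single_apply, Int.cast_ite,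
    Int.cast_one, Int.cast_zero, ite_mul, one_mul, zero_mul, sum_ite_eq', mem_univ, if_true]

lemma sum_signedSum [Fintype V] (F : MoleculeFamily V) (T : F.Idx → ℤ) (ε : F.Idx → ℤˣ) :
    ∑ x, F.signedSum T ε x = 0 := by
  simpa using F.sum_signedSum_mul T ε (1 : V → ℤ)

end SignedSum

variable {H : WGraph}

lemma IsTestFamily.mul_mass_le_TCnorm {F : MoleculeFamily H.V} {c : Finset H.ι} {τ η K M c₀ : ℝ}
    (hF : F.IsTestFamily c τ η K M c₀) (hconn : ∀ x y, H.Reachable x y) (hM : 0 ≤ M)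
    {T : F.Idx → ℤ} (hT : ∀ w, F.weight w * M = T w) (ε : F.Idx → ℤˣ) :
    M * (c₀ * H.mass c) ≤ TCnorm H.gdist fun x ↦ (F.signedSum T ε x : ℝ) := by
  obtain ⟨h, hh⟩ := hF.exists_isNorming ε
  have : Nonempty H.V := ⟨H.s⟩
  have hzero : ∑ x, (F.signedSum T ε x : ℝ) = 0 := mod_cast F.sum_signedSum T ε
  calc M * (c₀ * H.mass c) ≤ M * ∑ w, F.weight w * F.height w :=
        mul_le_mul_of_nonneg_left hF.le_sum_weight_mul_height hM
    _ = ∑ x, h x * F.signedSum T ε x := by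
        simp only [mul_comm (h _), sum_signedSum_mul, hh.fst_sub_snd, mul_sum, ← hT]
        refine sum_congr rfl fun w _ ↦ ?_
        rcases Int.units_eq_one_or (ε w) with hw | hw <;> simp [hw] <;> ring
    _ ≤ _ := sum_mul_le_TCnorm hzero (sub_le_gdist hconn hh.abs_sub_le)

lemma sum_inv_card_mul_abs_sum_signedSum_mul {V : Type*} [Fintype V] [DecidableEq V] {J : ℕ}
    {F : Fin J → MoleculeFamily V} {M : ℝ} (hM : 0 ≤ M) {T : ∀ j, (F j).Idx → ℤ}
    (hT : ∀ j w, (F j).weight w * M = T j w) (g : V → ℝ) :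
    ∑ i : Σ j, (F j).Idx → ℤˣ, (Fintype.card ((F i.1).Idx → ℤˣ) : ℝ)⁻¹ *
        |∑ x, ((F i.1).signedSum (T i.1) i.2 x : ℝ) * g x| =
      M * signedDifferenceSeminorm (fun j ↦ (F j).weight) (fun j ↦ (F j).fst)
        (fun j ↦ (F j).snd) g := by
  rw [Fintype.sum_sigma, signedDifferenceSeminorm_apply, mul_sum]
  refine sum_congr rfl fun j _ ↦ ?_
  rw [Fintype.expect_eq_sum_div_card, mul_div_assoc', div_eq_inv_mul, mul_sum, mul_sum]
  refine sum_congr rfl fun ε _ ↦ congrArg _ ?_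
  have hpull (x : ℝ) : M * |x| = |M * x| := by rw [abs_mul, abs_of_nonneg hM]
  rw [sum_signedSum_mul, hpull, mul_sum]
  refine congrArg _ (sum_congr rfl fun w _ ↦ ?_)
  rw [← hT]
  ring

lemma sum_inv_card_mul_abs_sum_signedSum_mul_le (hth : ∀ e, 0 ≤ H.th e) {J : ℕ}
    {F : Fin J → MoleculeFamily H.V} {c : Fin J → Finset H.ι} {τ θ K M c₀ : ℝ} (hτ : 0 < τ)
    (hθ0 : 0 ≤ θ) (hθ1 : θ < 1) (hK : 0 ≤ K) (hM : 0 ≤ M)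
    (hF : ∀ j : Fin J, (F j).IsTestFamily (c j) τ (θ ^ (j : ℕ)) K M c₀)
    {T : ∀ j, (F j).Idx → ℤ} (hT : ∀ j w, (F j).weight w * M = T j w) (g : H.V → ℝ) :
    ∑ i : Σ j, (F j).Idx → ℤˣ, (Fintype.card ((F i.1).Idx → ℤˣ) : ℝ)⁻¹ *
        |∑ x, ((F i.1).signedSum (T i.1) i.2 x : ℝ) * g x| ≤
      ∑ e, M * (K / (√τ * (1 - √θ))) * H.th e * |g (H.dst e) - g (H.src e)| := by
  have henergy j g : H.energy (c j) g ≤ H.energy univ g :=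
    sum_le_univ_sum_of_nonneg fun e ↦ mul_nonneg (hth e) (abs_nonneg _)
  have hseminorm := signedDifferenceSeminorm_le hth hτ hθ0 hθ1 hK (fun j ↦ (hF j).le_weight)
    (fun j ↦ (hF j).weight_le) (fun j g ↦ ((hF j).sum_weight_mul_le g).trans
      (mul_le_mul_of_nonneg_left (henergy j g) hK)) g
  simpa only [mul_sum, ← mul_assoc] using (sum_inv_card_mul_abs_sum_signedSum_mul hM hT g).trans_le
    (mul_le_mul_of_nonneg_left hseminorm hM)

/-- The integral vectors to which the distortion is applied are the signed sums of the molecules of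
all the families: their transportation norms are large because the families are norming, while in
`L₁` they are controlled by `signedDifferenceSeminorm`. -/
theorem mul_sum_mass_le {D : ℝ} (hD : IsL1Distortion (TCdist H.gdist) D)
    (hconn : ∀ x y, H.Reachable x y) (hlen : ∀ e, 0 ≤ H.len e) (hth : ∀ e, 0 ≤ H.th e) {J : ℕ}
    {F : Fin J → MoleculeFamily H.V} {c : Fin J → Finset H.ι} {τ θ K M c₀ : ℝ} (hτ : 0 < τ)
    (hθ0 : 0 ≤ θ) (hθ1 : θ < 1) (hK : 0 ≤ K) (hM : 0 < M)
    (hF : ∀ j : Fin J, (F j).IsTestFamily (c j) τ (θ ^ (j : ℕ)) K M c₀) :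
    c₀ * ∑ j, H.mass (c j) ≤ D * (K / (√τ * (1 - √θ)) * H.mass univ) := by
  choose T hT using fun j ↦ (hF j).weight_mul_eq_intCast
  have : Nonempty H.V := ⟨H.s⟩
  have hseminorm :=
    sum_inv_card_mul_abs_sum_signedSum_mul_le hth hτ hθ0 hθ1 hK hM.le hF hT
  set C := K / (√τ * (1 - √θ))
  have hC : 0 ≤ C := div_nonneg hK (mul_nonneg τ.sqrt_nonneg
    (sub_nonneg.mpr (Real.sqrt_le_one.mpr hθ1.le)))
  have htransfer := sum_mul_TCnorm_le hD (gdist_nonneg hlen)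
    (fun i : Σ j, (F j).Idx → ℤˣ ↦ (F i.1).sum_signedSum (T i.1) i.2) (fun i ↦ by positivity)
    (fun e ↦ mul_nonneg (mul_nonneg hM.le hC) (hth e)) hseminorm
  refine le_of_mul_le_mul_left ?_ hM
  calc M * (c₀ * ∑ j, H.mass (c j))
      = ∑ i : Σ j, (F j).Idx → ℤˣ,
          (Fintype.card ((F i.1).Idx → ℤˣ) : ℝ)⁻¹ * (M * (c₀ * H.mass (c i.1))) := by
        rw [Fintype.sum_sigma, mul_sum, mul_sum]
        refine sum_congr rfl fun j _ ↦ ?_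
        change _ = ∑ _ε : (F j).Idx → ℤˣ,
          (Fintype.card ((F j).Idx → ℤˣ) : ℝ)⁻¹ * (M * (c₀ * H.mass (c j)))
        rw [sum_const, card_univ, nsmul_eq_mul,
          mul_inv_cancel_left₀ (Nat.cast_ne_zero.mpr Fintype.card_ne_zero)]
    _ ≤ _ := sum_le_sum fun i _ ↦ mul_le_mul_of_nonneg_left
        ((hF i.1).mul_mass_le_TCnorm hconn hM.le (hT i.1) i.2) (by positivity)
    _ ≤ _ := htransfer
    _ ≤ D * ∑ e, M * C * H.th e * H.len e := by
        have hD0 := zero_le_one.trans hD.1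
        gcongr with e
        · exact mul_nonneg (mul_nonneg hM.le hC) (hth e)
        · exact gdist_dst_src_le_len hlen e
    _ = _ := by
        rw [mass]
        simp only [mul_sum]
        refine sum_congr rfl fun e _ ↦ ?_
        ring

end MoleculeFamily

namespace IsSTGraph

open WGraph

variable {G : WGraph} (hG : IsSTGraph G)

include hG

lemma nonempty_ι : Nonempty G.ι := by
  by_contra!
  simpa using hG.sum_th_mul_len

lemma exists_natCast_mul_mass_thinEdges_le (a : {v : G.V // v ≠ G.s ∧ v ≠ G.t}) {θ : ℝ}
    (hθ0 : 0 ≤ θ) (hθ1 : θ < 1) :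
    ∃ C, 0 ≤ C ∧ ∀ n D, IsL1Distortion (TCdist (G.slashPow (n + 1)).gdist) D →
      n * G.mass (G.thinEdges θ) ≤ C * D := by
  obtain ⟨K, hK, hKa⟩ := hG.exists_abs_sub_s_le a
  obtain ⟨M, hM, hMth⟩ := hG.exists_th_mul_eq_intCast
  obtain ⟨τ, hτ, hτth⟩ := exists_pos_forall_lt hG.th_pos
  obtain ⟨c₀, hc₀, hc₀len⟩ := exists_pos_forall_lt hG.len_pos
  have hτ1 : τ ≤ 1 := have ⟨e⟩ := hG.nonempty_ι; (hτth e).le.trans (hG.th_le_one e)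
  have hθ : 0 ≤ 1 - √θ := sub_nonneg.mpr (Real.sqrt_le_one.mpr hθ1.le)
  refine ⟨c₀⁻¹ * (K / (√τ * (1 - √θ))), by positivity, fun n D hD ↦ ?_⟩
  choose F hF using fun j : Fin n ↦ hG.exists_isTestFamily hK hKa hc₀.le (fun e ↦ (hc₀len e).le)
    hτ.le (fun e ↦ (hτth e).le) (mul_le_one₀ hτ1 (by positivity) (pow_le_one₀ hθ0 hθ1.le)) hMth
    (n + 1)
  have hmass := MoleculeFamily.mul_sum_mass_le hD (hG.slashPow_reachable _)
    (fun e ↦ (hG.slashPow_len_pos _ e).le) (fun e ↦ (hG.slashPow_th_pos _ e).le) hτ hθ0 hθ1 hK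
    (by positivity) hF
  have huniv : (G.slashPow (n + 1)).mass univ = 1 := hG.sum_slashPow_th_mul_len _
  rw [huniv, mul_one, ← le_inv_mul_iff₀ hc₀] at hmass
  exact (hG.mul_mass_thinEdges_le hθ0 hθ1.le n).trans (hmass.trans_eq (by ring))

lemma exists_natCast_add_one_le (hnp : ¬ IsSTPath G) (h3 : 3 ≤ Fintype.card G.V) :
    ∃ R, 0 < R ∧ ∀ n D, IsL1Distortion (TCdist (G.slashPow n).gdist) D → n + 1 ≤ R * D := by
  obtain ⟨e, he⟩ := hG.exists_th_lt_one hnp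
  obtain ⟨a, -, ha⟩ := exists_mem_notMem_of_card_lt_card (s := {G.s, G.t}) (t := univ)
    (card_le_two.trans_lt h3)
  obtain ⟨C, hC, hmass⟩ := hG.exists_natCast_mul_mass_thinEdges_le ⟨a, by simpa using ha⟩
    (hG.th_pos e).le he
  have hpos : 0 < G.mass (G.thinEdges (G.th e)) :=
    sum_pos (fun e' _ ↦ mul_pos (hG.th_pos e') (hG.len_pos e')) ⟨e, mem_thinEdges.mpr le_rfl⟩
  refine ⟨C / G.mass (G.thinEdges (G.th e)) + 2, by positivity, fun n D hD ↦ ?_⟩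
  have hD1 : 1 ≤ D := hD.1
  cases n with
  | zero =>
    have : 0 ≤ C / G.mass (G.thinEdges (G.th e)) * D := by positivity
    push_cast
    linarith
  | succ n =>
    have := (le_div_iff₀ hpos).mpr (hmass n D hD)
    rw [mul_div_right_comm] at this
    push_cast
    linarith

end IsSTGraph

/-- Let `G` be any `st`-graph that is not an `st`-path and has at least
three vertices. Then there exists a constant `C < ∞` (depending on `G` but not on `n`)
such that `c₁(TC(G^{⊘n})) ≥ C⁻¹·log|V(G^{⊘n})|` for every `n ≥ 0`. -/
theorem c1_TC_slashPow_lower (G : WGraph) (hG : IsSTGraph G) (hnp : ¬ IsSTPath G)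
    (h3 : 3 ≤ Fintype.card G.V) :
    ∃ C : ℝ, 0 < C ∧ ∀ n : ℕ,
      c1TC (G.slashPow n).gdist ≥
        C⁻¹ * Real.log (Fintype.card (G.slashPow n).V) := by
  obtain ⟨b, hb, hcard⟩ := G.exists_log_card_slashPow_V_le
  obtain ⟨R, hR, hdist⟩ := hG.exists_natCast_add_one_le hnp h3
  refine ⟨R * b, mul_pos hR hb, fun n ↦ le_csInf
    (WGraph.exists_isL1Distortion_gdist (hG.slashPow_reachable n) (hG.slashPow_len_pos n))
    fun D hD ↦ (inv_mul_le_iff₀ (mul_pos hR hb)).mpr ?_⟩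
  calc Real.log (Fintype.card (G.slashPow n).V) ≤ (n + 1) * b := hcard n
    _ ≤ R * D * b := mul_le_mul_of_nonneg_right (hdist n D hD) hb.le
    _ = R * b * D := mul_right_comm R D b
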